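/- There is an absolute constant C > 0 such that the following holds. Let δ > 0, let s be a positive integer, and let f : ℕ → (0,1) be a decreasing function. For any graph G of density p > 0 and any equipartition P₀ of V(G) of order s, there exists a graph G' on V(G) with |E(G) △ E(G')| ≤ δ|E(G)| such that G' has an f-regular equipartition refining P₀ whose order is at most F^{(h)}(s), where F(x) = 2^{x/f(x)}, F^{(h)} denotes the h-fold iteration of F, and h = ⌈C·log(1/p)/δ²⌉. -/

import Mathlib

/-!
The proof is an entropy increment over equipartitions `P` of the vertex set. The potential is the
sum over ordered pairs of vertices of `-d log d`, where `d` is the density of `G` between the parts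
of `P` containing the two vertices. With `p` the density of `G` and `n` the number of vertices, it
starts at no more than `p n² log (1 / p)` and stays nonnegative, so it can drop by `δ² p n² / 256`
at most `256 log (1 / p) / δ²` times. Compared with the quadratic energy, this potential makes the
number of steps depend on `p` only through `log (1 / p)`.

Given `P` of order `k`, a weighted form of the Frieze–Kannan weak regularity lemma refines it to a
partition `r` with at most `k * 4 ^ T` classes, `T` polynomial in `k / f k`, such that `G` is close
in cut norm to its densities over `r`, even after multiplication by the factors by which the next
paragraph rescales edges and non-edges. Two cases arise, according to the `L¹` distance between the
densities over `r` and those over `P`.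

* If the distance is at most `δ p n² / 4`, then in each cell of `r` a uniform proportion of the
  edges or of the non-edges is changed so that the density becomes that of `P`. Randomized rounding
  turns this weighted graph into a graph for which every pair of parts of `P` is regular.
* Otherwise `r` is approximated by an equipartition `Q` refining `P`. The `L¹` distance survives up
  to a constant, and a Pinsker-type inequality bounds the drop in entropy from below.

One such step costs two applications of `F(x) = 2 ^ (x / f x)`. Before the first one, `P₀` is
refined to an equipartition of order at least `256` and `16 / (δ p)`, which costs
`O(log (1 / p) / δ²)` further applications. This count needs `log (1 / p)` to be at least of order
`δ`; when it is smaller, or when `δ ≥ 1`, the complete or the empty graph serves as `G'`, and when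
`n` is below the required bound the partition into singletons serves.
-/

open Finset
open scoped Classical

/-- `eCnt G A B` is the number of ordered pairs `(u,v) ∈ A × B` with `uv` an edge of `G`. -/
noncomputable def eCnt {V : Type*} [Fintype V] (G : SimpleGraph V) (A B : Finset V) : ℕ :=
  ((A ×ˢ B).filter fun p => G.Adj p.1 p.2).card

/-- The edge density `d_G(A,B)` between vertex subsets `A` and `B`. -/
noncomputable def dens {V : Type*} [Fintype V] (G : SimpleGraph V) (A B : Finset V) : ℝ :=
  eCnt G A B / (A.card * B.card)

/-- The pair `(A,B)` is `ε`-regular. -/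
def RegPair {V : Type*} [Fintype V] (G : SimpleGraph V) (ε : ℝ) (A B : Finset V) : Prop :=
  ∀ A' ⊆ A, ∀ B' ⊆ B, ε * A.card ≤ A'.card → ε * B.card ≤ B'.card →
    |dens G A B - dens G A' B'| ≤ ε

/-- The density `d_G = 2|E|/|V|²` of a graph. -/
noncomputable def graphDensity {V : Type*} [Fintype V] (G : SimpleGraph V) : ℝ :=
  2 * G.edgeSet.ncard / (Fintype.card V : ℝ) ^ 2

open scoped BigOperators

/-! ### Averages over the classes of an equivalence relation -/

section CondAvg

variable {X : Type*} [Fintype X] {r r' : Setoid X} {g h : X → ℝ} {x : X}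

/-- The conditional expectation of `g` with respect to the partition of `X` into the classes of `r`:
each value is replaced by the average over its class. Partitions are encoded as setoids, so `r' ≤ r`
says that `r'` refines `r`, and `r ≤ Setoid.ker h` that `h` is constant on the classes of `r`. -/
noncomputable def condAvg (r : Setoid X) (g : X → ℝ) (x : X) : ℝ :=
  𝔼 y with r y x, g y

lemma nonempty_filter_rel (r : Setoid X) (x : X) : ({y | r y x} : Finset X).Nonempty :=
  ⟨x, by simp⟩

lemma filter_rel_congr {x y : X} (hxy : r x y) : univ.filter (r · x) = univ.filter (r · y) :=
  filter_congr fun _ _ => ⟨fun hz => r.trans' hz hxy, fun hz => r.trans' hz (r.symm' hxy)⟩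

lemma le_ker_condAvg (r : Setoid X) (g : X → ℝ) : r ≤ Setoid.ker (condAvg r g) := by
  intro x y hxy
  rw [Setoid.ker_def, condAvg, filter_rel_congr hxy, condAvg]

lemma condAvg_mem_Icc {a b : ℝ} (hg : ∀ x, g x ∈ Set.Icc a b) (r : Setoid X) (x : X) :
    condAvg r g x ∈ Set.Icc a b :=
  ⟨le_expect (nonempty_filter_rel r x) fun y _ => (hg y).1,
    expect_le (nonempty_filter_rel r x) fun y _ => (hg y).2⟩

lemma condAvg_nonneg (hg : ∀ x, 0 ≤ g x) (r : Setoid X) (x : X) : 0 ≤ condAvg r g x :=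
  expect_nonneg fun y _ => hg y

lemma condAvg_top (g : X → ℝ) (x : X) : condAvg ⊤ g x = 𝔼 y, g y :=
  expect_congr (filter_true_of_mem fun _ _ => trivial) fun _ _ => rfl

lemma condAvg_eq_zero_of_le (hr : r' ≤ r) (hg : ∀ x, 0 ≤ g x) (hx : condAvg r g x = 0) :
    condAvg r' g x = 0 := by
  have hzero := (expect_eq_zero_iff_of_nonneg fun y _ => hg y).1 hx
  exact expect_eq_zero fun y hy => hzero y (by simpa using hr (by simpa using hy))

theorem sum_condAvg_mul (hr : r ≤ Setoid.ker h) :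
    ∑ x, condAvg r g x * h x = ∑ x, g x * h x := by
  have hclass (y : X) : ∑ x with r x y, h x / #{z | r z x} = h y := by
    have hcongr : ∀ x ∈ ({x | r x y} : Finset X), h x / #{z | r z x} = h y / #{z | r z y} := by
      intro x hx
      have hxy : r x y := by simpa using hx
      rw [filter_rel_congr hxy, Setoid.ker_def.1 (hr hxy)]
    have hpos : (0 : ℝ) < #{z | r z y} := mod_cast (nonempty_filter_rel r y).card_pos
    rw [sum_congr rfl hcongr, sum_const, nsmul_eq_mul, mul_div_cancel₀ _ hpos.ne']
  calc ∑ x, condAvg r g x * h x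
      = ∑ x, ∑ y, if r x y then g y * (h x / #{z | r z x}) else 0 := by
        refine sum_congr rfl fun x _ => ?_
        rw [condAvg, expect_eq_sum_div_card, ← sum_filter, ← sum_mul]
        simp only [r.comm']
        ring
    _ = ∑ y, g y * ∑ x with r x y, h x / #{z | r z x} := by
        rw [sum_comm]
        exact sum_congr rfl fun y _ => by rw [← sum_filter, mul_sum]
    _ = ∑ y, g y * h y := by simp only [hclass]

lemma sum_condAvg (r : Setoid X) (g : X → ℝ) : ∑ x, condAvg r g x = ∑ x, g x := by
  simpa using sum_condAvg_mul (r := r) (g := g) (h := fun _ => 1) fun _ _ _ => rfl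

lemma sum_sub_condAvg_mul_eq_zero (hr : r ≤ Setoid.ker h) :
    ∑ x, (g x - condAvg r g x) * h x = 0 := by
  simp only [sub_mul, sum_sub_distrib, sum_condAvg_mul hr, sub_self]

lemma sum_condAvg_mul_condAvg (hr : r' ≤ r) (φ : ℝ → ℝ) :
    ∑ x, condAvg r' g x * φ (condAvg r g x) = ∑ x, condAvg r g x * φ (condAvg r g x) := by
  have hφ : r ≤ Setoid.ker fun x => φ (condAvg r g x) := fun x y hxy =>
    congrArg φ (le_ker_condAvg r g hxy)
  rw [sum_condAvg_mul (hr.trans hφ), sum_condAvg_mul hφ]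

/-- The energy, or mean square, of the averages of `g` over the classes of `r`, the potential of the
weak regularity lemma. Refining `r` increases it. -/
noncomputable def energy (r : Setoid X) (g : X → ℝ) : ℝ :=
  ∑ x, condAvg r g x ^ 2

lemma energy_le_card (hg : ∀ x, g x ∈ Set.Icc (-1) 1) (r : Setoid X) :
    energy r g ≤ Fintype.card X := by
  have hsq : ∀ x ∈ univ, condAvg r g x ^ 2 ≤ 1 := fun x _ =>
    (sq_le_one_iff_abs_le_one _).2 (abs_le.2 (condAvg_mem_Icc hg r x))
  simpa [energy] using sum_le_card_nsmul univ _ 1 hsq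

theorem sum_sq_condAvg_sub (hr : r' ≤ r) :
    ∑ x, (condAvg r' g x - condAvg r g x) ^ 2 = energy r' g - energy r g := by
  have horth := sum_condAvg_mul_condAvg (g := g) hr id
  have hexpand (x : X) : (condAvg r' g x - condAvg r g x) ^ 2 = condAvg r' g x ^ 2
      - 2 * (condAvg r' g x * condAvg r g x) + condAvg r g x * condAvg r g x := by ring
  simp only [id] at horth
  simp only [energy, hexpand, sum_add_distrib, sum_sub_distrib, ← mul_sum, horth, pow_two]
  ring

lemma energy_mono (hr : r' ≤ r) : energy r g ≤ energy r' g :=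
  sub_nonneg.1 (sum_sq_condAvg_sub (g := g) hr ▸ sum_nonneg fun _ _ => sq_nonneg _)

theorem sq_sum_mul_sub_condAvg_le (hr : r' ≤ r) (hh : r' ≤ Setoid.ker h) :
    (∑ x, h x * (g x - condAvg r g x)) ^ 2 ≤ (∑ x, h x ^ 2) * (energy r' g - energy r g) := by
  have hsum : ∑ x, h x * (g x - condAvg r g x) = ∑ x, h x * (condAvg r' g x - condAvg r g x) := by
    rw [← sub_eq_zero, ← sum_sub_condAvg_mul_eq_zero (g := g) hh, ← sum_sub_distrib]
    exact sum_congr rfl fun x _ => by ring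
  rw [hsum, ← sum_sq_condAvg_sub hr]
  exact sum_mul_sq_le_sq_mul_sq _ _ _

lemma condAvg_prod_swap {V : Type*} [Fintype V] {r : Setoid V} {g : V × V → ℝ}
    (hg : ∀ x, g x.swap = g x) (x : V × V) :
    condAvg (r.prod r) g x.swap = condAvg (r.prod r) g x :=
  expect_equiv (Equiv.prodComm V V)
    (fun y => by simp only [mem_filter_univ]; exact and_comm) fun y _ => (hg y).symm

end CondAvg

/-! ### Entropy -/

section Entropy

variable {X : Type*} [Fintype X] {r r' : Setoid X} {g : X → ℝ}

/-- The entropy of the averages of `g` over the classes of `r`, the potential of the increment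
argument. Refining `r` decreases it. -/
noncomputable def entropy (r : Setoid X) (g : X → ℝ) : ℝ :=
  ∑ x, Real.negMulLog (condAvg r g x)

lemma entropy_nonneg (hg : ∀ x, g x ∈ Set.Icc 0 1) (r : Setoid X) : 0 ≤ entropy r g :=
  sum_nonneg fun x _ =>
    Real.negMulLog_nonneg (condAvg_mem_Icc hg r x).1 (condAvg_mem_Icc hg r x).2

lemma sq_sqrt_sub_sqrt_le {a b : ℝ} (ha : 0 ≤ a) (hb : 0 ≤ b) (hab : b = 0 → a = 0) :
    (√a - √b) ^ 2 ≤ a * Real.log a - a * Real.log b - a + b := by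
  rcases ha.eq_or_lt with rfl | ha
  · simp [Real.sq_sqrt hb]
  have hb : 0 < b := hb.lt_of_ne' fun h => ha.ne' (hab h)
  have hlog : Real.log b - Real.log a ≤ 2 * (√b / √a - 1) := by
    have := Real.log_le_sub_one_of_pos (div_pos (Real.sqrt_pos.2 hb) (Real.sqrt_pos.2 ha))
    rw [Real.log_div (by positivity) (by positivity), Real.log_sqrt hb.le,
      Real.log_sqrt ha.le] at this
    linarith
  have hsqrt : a * (√b / √a) = √a * √b := by
    rw [mul_div_assoc', div_eq_iff (by positivity)]
    linear_combination (-√b) * Real.mul_self_sqrt ha.le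
  nlinarith [mul_le_mul_of_nonneg_left hlog ha.le, Real.sq_sqrt ha.le, Real.sq_sqrt hb.le]

theorem sum_sq_sqrt_condAvg_sub_le (hg : ∀ x, 0 ≤ g x) (hr : r' ≤ r) :
    ∑ x, (√(condAvg r' g x) - √(condAvg r g x)) ^ 2 ≤ entropy r g - entropy r' g := by
  calc ∑ x, (√(condAvg r' g x) - √(condAvg r g x)) ^ 2
      ≤ ∑ x, (condAvg r' g x * Real.log (condAvg r' g x)
          - condAvg r' g x * Real.log (condAvg r g x) - condAvg r' g x + condAvg r g x) :=
        sum_le_sum fun x _ => sq_sqrt_sub_sqrt_le (condAvg_nonneg hg r' x) (condAvg_nonneg hg r x)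
          (condAvg_eq_zero_of_le hr hg)
    _ = entropy r g - entropy r' g := by
        simp only [sum_add_distrib, sum_sub_distrib, sum_condAvg, sum_condAvg_mul_condAvg hr,
          entropy, Real.negMulLog, neg_mul, sum_neg_distrib]
        ring

lemma entropy_anti (hg : ∀ x, 0 ≤ g x) (hr : r' ≤ r) : entropy r' g ≤ entropy r g :=
  sub_nonneg.1 ((sum_nonneg fun _ _ => sq_nonneg _).trans (sum_sq_sqrt_condAvg_sub_le hg hr))

lemma entropy_le (hg : ∀ x, 0 ≤ g x) (r : Setoid X) :
    entropy r g ≤ Fintype.card X * Real.negMulLog (𝔼 x, g x) := by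
  simpa [entropy, condAvg_top] using entropy_anti hg (le_top : r ≤ ⊤)

lemma sq_sum_abs_sub_le {a b : X → ℝ} (ha : ∀ x, 0 ≤ a x) (hb : ∀ x, 0 ≤ b x) :
    (∑ x, |a x - b x|) ^ 2 ≤ 2 * (∑ x, a x + ∑ x, b x) * ∑ x, (√(a x) - √(b x)) ^ 2 := by
  have hfactor (x : X) : |a x - b x| = |√(a x) - √(b x)| * (√(a x) + √(b x)) := by
    rw [← abs_of_nonneg (a := √(a x) + √(b x)) (by positivity), ← abs_mul]
    congr 1
    linear_combination -Real.sq_sqrt (ha x) + Real.sq_sqrt (hb x)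
  have hsq (x : X) : (√(a x) + √(b x)) ^ 2 ≤ 2 * (a x + b x) := by
    have := add_sq_le (a := √(a x)) (b := √(b x))
    rwa [Real.sq_sqrt (ha x), Real.sq_sqrt (hb x)] at this
  calc (∑ x, |a x - b x|) ^ 2
      ≤ (∑ x, |√(a x) - √(b x)| ^ 2) * ∑ x, (√(a x) + √(b x)) ^ 2 := by
        simp only [hfactor]
        exact sum_mul_sq_le_sq_mul_sq _ _ _
    _ ≤ (∑ x, |√(a x) - √(b x)| ^ 2) * ∑ x, 2 * (a x + b x) := by
        gcongr with x
        exact hsq x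
    _ = _ := by
        simp only [sq_abs, ← mul_sum, sum_add_distrib]
        ring

/-- A form of Pinsker's inequality. -/
theorem sq_sum_abs_condAvg_sub_le (hg : ∀ x, 0 ≤ g x) (hr : r' ≤ r) :
    (∑ x, |condAvg r' g x - condAvg r g x|) ^ 2
      ≤ 4 * (∑ x, g x) * (entropy r g - entropy r' g) := by
  calc (∑ x, |condAvg r' g x - condAvg r g x|) ^ 2
      ≤ 2 * (∑ x, condAvg r' g x + ∑ x, condAvg r g x)
          * ∑ x, (√(condAvg r' g x) - √(condAvg r g x)) ^ 2 :=
        sq_sum_abs_sub_le (condAvg_nonneg hg r') (condAvg_nonneg hg r)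
    _ = 4 * (∑ x, g x) * ∑ x, (√(condAvg r' g x) - √(condAvg r g x)) ^ 2 := by
        simp only [sum_condAvg]
        ring
    _ ≤ _ := mul_le_mul_of_nonneg_left (sum_sq_sqrt_condAvg_sub_le hg hr)
        (mul_nonneg zero_le_four (sum_nonneg fun x _ => hg x))

end Entropy

/-! ### Weak regularity -/

section WeakRegularity

variable {V : Type*} [Fintype V] {r r₀ : Setoid V} {g : V × V → ℝ} {ε : ℝ}

/-- The cut norm of `h`, without normalization, is at most `t`. -/
def CutBounded (h : V × V → ℝ) (t : ℝ) : Prop :=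
  ∀ A B : Finset V, |∑ x ∈ A ×ˢ B, h x| ≤ t

lemma card_quotient_inf_ker_le {V κ : Type*} [Finite V] [Finite κ] (r : Setoid V) (φ : V → κ) :
    Nat.card (Quotient (r ⊓ Setoid.ker φ)) ≤ Nat.card (Quotient r) * Nat.card κ := by
  rw [← Nat.card_prod]
  refine Nat.card_le_card_of_injective
    (Quotient.lift (fun v => ((⟦v⟧ : Quotient r), φ v))
      fun v w h => Prod.ext (Quotient.sound h.1) h.2) ?_
  rintro ⟨v⟩ ⟨w⟩ h
  exact Quotient.sound ⟨Quotient.exact (congrArg Prod.fst h), congrArg Prod.snd h⟩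

/-- Separate the points of `A` and of `B`, for `A ×ˢ B` a cut violating the bound. -/
lemma exists_energy_gain {b : V × V → ℝ} (hb : r.prod r ≤ Setoid.ker b) (hb1 : ∀ x, |b x| ≤ 1)
    (hε : 0 ≤ ε) (hcut : ¬ CutBounded (fun x => b x * (g x - condAvg (r.prod r) g x))
      (ε * Fintype.card V ^ 2)) :
    ∃ r' ≤ r, Nat.card (Quotient r') ≤ Nat.card (Quotient r) * 4 ∧
      energy (r.prod r) g + ε ^ 2 * Fintype.card V ^ 2 < energy (r'.prod r') g := by
  obtain ⟨A, B, hAB⟩ : ∃ A B : Finset V, ε * Fintype.card V ^ 2 <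
      |∑ x ∈ A ×ˢ B, b x * (g x - condAvg (r.prod r) g x)| := by
    simpa [CutBounded] using hcut
  let r' := r ⊓ Setoid.ker fun v => (v ∈ A, v ∈ B)
  have hr' : r' ≤ r := inf_le_left
  have hprod : r'.prod r' ≤ r.prod r := fun x y h => ⟨hr' h.1, hr' h.2⟩
  refine ⟨r', hr', by simpa using card_quotient_inf_ker_le r fun v => (v ∈ A, v ∈ B), ?_⟩
  let W (x : V × V) : ℝ := if x ∈ A ×ˢ B then b x else 0
  have hW : r'.prod r' ≤ Setoid.ker W := by
    intro x y h
    have hA : (x.1 ∈ A) = (y.1 ∈ A) := congrArg Prod.fst h.1.2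
    have hB : (x.2 ∈ B) = (y.2 ∈ B) := congrArg Prod.snd h.2.2
    simp only [Setoid.ker_def, W, mem_product, hA, hB, Setoid.ker_def.1 (hb (hprod h))]
  have hW1 : ∑ x, W x ^ 2 ≤ (Fintype.card V : ℝ) ^ 2 := by
    have hsq : ∀ x ∈ univ, W x ^ 2 ≤ 1 := fun x _ => by
      simp only [W]
      split_ifs
      · exact (sq_le_one_iff_abs_le_one _).2 (hb1 x)
      · simp
    simpa [pow_two] using sum_le_card_nsmul univ _ 1 hsq
  have hgain : (ε * Fintype.card V ^ 2) ^ 2 <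
      Fintype.card V ^ 2 * (energy (r'.prod r') g - energy (r.prod r) g) := by
    calc (ε * Fintype.card V ^ 2) ^ 2
        < (∑ x, W x * (g x - condAvg (r.prod r) g x)) ^ 2 :=
          sq_lt_sq.2 (by simpa [W, abs_of_nonneg hε, -mem_product] using hAB)
      _ ≤ (∑ x, W x ^ 2) * (energy (r'.prod r') g - energy (r.prod r) g) :=
          sq_sum_mul_sub_condAvg_le hprod hW
      _ ≤ _ := mul_le_mul_of_nonneg_right hW1 (sub_nonneg.2 (energy_mono hprod))
  nlinarith [sq_nonneg (Fintype.card V : ℝ)]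

lemma exists_cutBounded_of_card_le_energy (hε : 0 ≤ ε) (hg : ∀ x, g x ∈ Set.Icc (-1) 1)
    {β : Setoid V → V × V → ℝ} (hβ : ∀ r ≤ r₀, r.prod r ≤ Setoid.ker (β r))
    (hβ1 : ∀ r x, |β r x| ≤ 1) (t : ℕ) (r : Setoid V) (hr : r ≤ r₀)
    (hr_energy : (Fintype.card V : ℝ) ^ 2 ≤
      energy (r.prod r) g + t * (ε ^ 2 * Fintype.card V ^ 2)) :
    ∃ r' ≤ r, Nat.card (Quotient r') ≤ Nat.card (Quotient r) * 4 ^ t ∧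
      CutBounded (fun x => β r' x * (g x - condAvg (r'.prod r') g x)) (ε * Fintype.card V ^ 2) := by
  by_cases hcut : CutBounded (fun x => β r x * (g x - condAvg (r.prod r) g x))
      (ε * Fintype.card V ^ 2)
  · exact ⟨r, le_rfl, Nat.le_mul_of_pos_right _ (by positivity), hcut⟩
  obtain ⟨r₁, hr₁, hcard₁, hgain⟩ := exists_energy_gain (hβ r hr) (hβ1 r) hε hcut
  cases t with
  | zero =>
    have hle := energy_le_card hg (r₁.prod r₁)
    have hpos : 0 ≤ ε ^ 2 * (Fintype.card V : ℝ) ^ 2 := by positivity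
    rw [Fintype.card_prod, Nat.cast_mul] at hle
    simp only [CharP.cast_eq_zero, zero_mul] at hr_energy
    linarith
  | succ t =>
    obtain ⟨r₂, hr₂, hcard₂, hcut₂⟩ := exists_cutBounded_of_card_le_energy hε hg hβ hβ1 t r₁
      (hr₁.trans hr) (by push_cast at hr_energy; linarith)
    refine ⟨r₂, hr₂.trans hr₁, hcard₂.trans ?_, hcut₂⟩
    rw [pow_succ', ← mul_assoc]
    gcongr

theorem exists_cutBounded_refinement (hε : 0 ≤ ε) (hg : ∀ x, g x ∈ Set.Icc (-1) 1)
    {β : Setoid V → V × V → ℝ} (hβ : ∀ r ≤ r₀, r.prod r ≤ Setoid.ker (β r))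
    (hβ1 : ∀ r x, |β r x| ≤ 1) {T : ℕ} (hT : 1 ≤ T * ε ^ 2) :
    ∃ r ≤ r₀, Nat.card (Quotient r) ≤ Nat.card (Quotient r₀) * 4 ^ T ∧
      CutBounded (fun x => β r x * (g x - condAvg (r.prod r) g x)) (ε * Fintype.card V ^ 2) := by
  refine exists_cutBounded_of_card_le_energy hε hg hβ hβ1 T r₀ le_rfl ?_
  have henergy : 0 ≤ energy (r₀.prod r₀) g := sum_nonneg fun x _ => sq_nonneg _
  nlinarith [sq_nonneg (Fintype.card V : ℝ)]

end WeakRegularity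

/-! ### Randomized rounding -/

section Rounding

open MeasureTheory ProbabilityTheory

variable {E I : Type*} [Fintype E] [Fintype I]

/-- Each `e` is put into the random set independently with probability `w e`. -/
lemma measureReal_le_sum_le (a : E → ℝ) (ha : ∀ e, |a e| ≤ 1) (w : E → unitInterval) {t : ℝ}
    (ht : 0 ≤ t) :
    (Measure.pi fun e => bernoulliMeasure true false (w e)).real
        {ω | t ≤ ∑ e, ((if ω e then a e else 0) - w e * a e)} ≤
      Real.exp (-t ^ 2 / (2 * Fintype.card E)) := by
  let μ (e : E) := bernoulliMeasure true false (w e)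
  let Y (e : E) (b : Bool) : ℝ := if b then a e else 0
  have hY (e : E) : ∫ b, Y e b ∂μ e = w e * a e := by
    simp [Y, μ, integral_bernoulliMeasure]
  have hindep : iIndepFun (fun e ω => Y e (ω e) - w e * a e) (Measure.pi μ) :=
    iIndepFun_pi (X := fun e b => Y e b - w e * a e) fun e => (measurable_of_finite _).aemeasurable
  have hsub (e : E) : HasSubgaussianMGF (fun ω => Y e (ω e) - w e * a e) 1 (Measure.pi μ) := by
    have hmem (b : Bool) : Y e b ∈ Set.Icc (-1) 1 := by
      rcases b with _ | _
      · simp [Y]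
      · simpa [Y] using abs_le.1 (ha e)
    have h := hasSubgaussianMGF_of_mem_Icc (μ := Measure.pi μ) (X := fun ω => Y e (ω e))
      (measurable_of_finite _).aemeasurable (.of_forall fun ω => hmem (ω e))
    rw [integral_comp_eval (X := fun _ => Bool) (i := e) (f := Y e)
      (measurable_of_finite _).aestronglyMeasurable, hY] at h
    convert h using 1
    norm_num
  simpa using HasSubgaussianMGF.measure_sum_ge_le_of_iIndepFun hindep (s := univ)
    (fun e _ => hsub e) ht

lemma exists_finset_sum_sub_lt (a : I → E → ℝ) (ha : ∀ i e, |a i e| ≤ 1) (w : E → unitInterval)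
    {t : ℝ} (ht : 0 ≤ t) (hI : Fintype.card I * Real.exp (-t ^ 2 / (2 * Fintype.card E)) < 1) :
    ∃ S : Finset E, ∀ i, ∑ e ∈ S, a i e - ∑ e, w e * a i e < t := by
  let μ := Measure.pi fun e => bernoulliMeasure true false (w e)
  let bad (i : I) : Set (E → Bool) := {ω | t ≤ ∑ e, ((if ω e then a i e else 0) - w e * a i e)}
  have hbad : μ.real (⋃ i, bad i) < 1 := by
    calc μ.real (⋃ i, bad i)
        ≤ ∑ i, μ.real (bad i) := measureReal_iUnion_fintype_le _
      _ ≤ ∑ _i : I, Real.exp (-t ^ 2 / (2 * Fintype.card E)) :=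
          sum_le_sum fun i _ => measureReal_le_sum_le (a i) (ha i) w ht
      _ < 1 := by simpa using hI
  obtain ⟨ω, hω⟩ : ∃ ω, ω ∉ ⋃ i, bad i := by
    by_contra! h
    simp [Set.eq_univ_of_forall h] at hbad
  refine ⟨univ.filter (ω · = true), fun i => ?_⟩
  rw [sum_filter, ← sum_sub_distrib]
  exact not_le.1 fun h => hω (Set.mem_iUnion.2 ⟨i, h⟩)

theorem exists_finset_abs_sum_sub_lt (a : I → E → ℝ) (ha : ∀ i e, |a i e| ≤ 1)
    (w : E → unitInterval) {t : ℝ} (ht : 0 ≤ t)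
    (hI : 2 * Fintype.card I * Real.exp (-t ^ 2 / (2 * Fintype.card E)) < 1) :
    ∃ S : Finset E, ∀ i, |∑ e ∈ S, a i e - ∑ e, w e * a i e| < t := by
  obtain ⟨S, hS⟩ := exists_finset_sum_sub_lt (Sum.elim a (-a))
    (by rintro (i | i) e <;> simpa using ha i e) w ht (by simpa [← two_mul] using hI)
  refine ⟨S, fun i => abs_lt.2 ⟨?_, hS (.inl i)⟩⟩
  have hneg := hS (.inr i)
  simp only [Sum.elim_inr, Pi.neg_apply, mul_neg, sum_neg_distrib] at hneg
  linarith

end Rounding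

section GraphRounding

variable {V : Type*}

/-- The adjacency matrix of `G` as a function on ordered pairs of vertices. -/
noncomputable def adjFun (G : SimpleGraph V) (x : V × V) : ℝ :=
  if G.Adj x.1 x.2 then 1 else 0

/-- The number of edges to be added to or removed from `G` to obtain `H`. -/
noncomputable def editDist (G H : SimpleGraph V) : ℕ :=
  (symmDiff G.edgeSet H.edgeSet).ncard

lemma adjFun_mem_Icc (G : SimpleGraph V) (x : V × V) : adjFun G x ∈ Set.Icc 0 1 := by
  rw [adjFun]
  split_ifs <;> simp

lemma adjFun_swap (G : SimpleGraph V) (x : V × V) : adjFun G x.swap = adjFun G x := by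
  simp [adjFun, G.adj_comm]

lemma sum_image_sym2Mk {A B : Finset V} (hAB : Disjoint A B) (F : Sym2 V → ℝ) :
    ∑ e ∈ (A ×ˢ B).image (Sym2.mk.uncurry), F e = ∑ x ∈ A ×ˢ B, F s(x.1, x.2) := by
  refine sum_image fun x hx y hy hxy => ?_
  simp only [coe_product, Set.mem_prod, mem_coe] at hx hy
  rcases Sym2.eq_iff.1 hxy with h | h
  · exact Prod.ext h.1 h.2
  · exact absurd hy.2 (disjoint_left.1 hAB (h.1 ▸ hx.1))

variable [Fintype V]

lemma eCnt_eq_sum (G : SimpleGraph V) (A B : Finset V) :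
    (eCnt G A B : ℝ) = ∑ x ∈ A ×ˢ B, adjFun G x := by
  simp [eCnt, adjFun]

lemma eCnt_fromEdgeSet {A B : Finset V} (hAB : Disjoint A B) (S : Finset (Sym2 V)) :
    (eCnt (.fromEdgeSet S) A B : ℝ) =
      ∑ e ∈ S, if e ∈ (A ×ˢ B).image Sym2.mk.uncurry then 1 else 0 := by
  calc (eCnt (.fromEdgeSet S) A B : ℝ)
      = ∑ x ∈ A ×ˢ B, if s(x.1, x.2) ∈ S then 1 else 0 := by
        refine (eCnt_eq_sum _ A B).trans (sum_congr rfl fun x hx => ?_)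
        rw [mem_product] at hx
        simp [adjFun, hAB.forall_ne_finset hx.1 hx.2]
    _ = ∑ e ∈ (A ×ˢ B).image Sym2.mk.uncurry, if e ∈ S then 1 else 0 :=
        (sum_image_sym2Mk hAB fun e => if e ∈ S then (1 : ℝ) else 0).symm
    _ = _ := by rw [sum_ite_mem, sum_ite_mem, inter_comm]

lemma editDist_fromEdgeSet_le (G : SimpleGraph V) (S : Finset (Sym2 V)) (w : Sym2 V → ℝ) :
    (editDist G (.fromEdgeSet S) : ℝ) ≤ ∑ e, |w e - if e ∈ G.edgeSet then 1 else 0| +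
      (∑ e ∈ S, (if e ∈ G.edgeSet then -1 else 1) -
        ∑ e, w e * if e ∈ G.edgeSet then -1 else 1) := by
  have hsub : symmDiff G.edgeSet (SimpleGraph.fromEdgeSet (S : Set (Sym2 V))).edgeSet ⊆
      (univ.filter fun e => ¬ (e ∈ G.edgeSet ↔ e ∈ S) : Finset (Sym2 V)) := by
    intro e he
    rw [SimpleGraph.edgeSet_fromEdgeSet] at he
    have hdiag := G.not_isDiag_of_mem_edgeSet (e := e)
    simp only [Set.mem_symmDiff, Set.mem_sdiff, mem_coe, Sym2.mem_diagSet] at he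
    simp only [coe_filter, mem_univ, true_and, Set.mem_ofPred_eq]
    tauto
  have hcard : editDist G (.fromEdgeSet S) ≤ #{e | ¬ (e ∈ G.edgeSet ↔ e ∈ S)} := by
    simpa only [editDist, Set.ncard_coe_finset] using Set.ncard_le_ncard hsub
  refine (Nat.cast_le.2 hcard).trans ?_
  rw [← sum_boole, ← univ_inter S, ← sum_ite_mem, ← sum_sub_distrib, ← sum_add_distrib]
  refine sum_le_sum fun e _ => ?_
  have h0 := le_abs_self (w e)
  have h1 := neg_le_abs (w e - 1)
  split_ifs <;> simp_all <;> linarith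

lemma sum_le_sum_comp_of_surjective {X Y : Type*} [Fintype X] [Fintype Y] {φ : X → Y}
    (hφ : φ.Surjective) {F : Y → ℝ} (hF : ∀ y, 0 ≤ F y) : ∑ y, F y ≤ ∑ x, F (φ x) := by
  calc ∑ y, F y = ∑ y, F (φ (Function.surjInv hφ y)) := by
        simp only [Function.surjInv_eq hφ]
    _ = ∑ x ∈ univ.map ⟨_, Function.injective_surjInv hφ⟩, F (φ x) := by simp
    _ ≤ ∑ x, F (φ x) := sum_le_univ_sum_of_nonneg fun x => hF _

lemma two_mul_four_pow_add_one_mul_exp_lt_one {n : ℕ} (hn : 0 < n) :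
    2 * ((4 : ℝ) ^ n + 1) * Real.exp (-(4 * n)) < 1 := by
  have hexp : (16 : ℝ) ^ n < Real.exp (4 * n) := by
    have h16 : (16 : ℝ) < Real.exp 4 := by
      rw [show (4 : ℝ) = (4 : ℕ) * 1 by norm_num, Real.exp_nat_mul]
      nlinarith [pow_lt_pow_left₀ Real.exp_one_gt_d9 (by norm_num) (four_ne_zero)]
    rw [mul_comm, Real.exp_nat_mul]
    exact pow_lt_pow_left₀ h16 (by norm_num) hn.ne'
  have hpow : (4 : ℝ) ≤ 4 ^ n := le_self_pow₀ (by norm_num) hn.ne'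
  rw [Real.exp_neg, ← div_eq_mul_inv, div_lt_one (Real.exp_pos _)]
  refine lt_of_le_of_lt ?_ hexp
  rw [show (16 : ℝ) = 4 * 4 by norm_num, mul_pow]
  nlinarith

lemma neg_sq_div_card_sym2_le [Nonempty V] {η : ℝ} (hn : 8 ≤ η ^ 2 * Fintype.card V) :
    -(η * Fintype.card V ^ 2) ^ 2 / (2 * Fintype.card (Sym2 V)) ≤ -(4 * Fintype.card V) := by
  have hcard : (Fintype.card (Sym2 V) : ℝ) ≤ Fintype.card V ^ 2 := by
    rw [pow_two]
    exact_mod_cast Fintype.card_prod V V ▸ Fintype.card_le_of_surjective _ Sym2.mk_surjective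
  have : Nonempty (Sym2 V) := .map Sym2.diag ‹_›
  rw [neg_div, neg_le_neg_iff, le_div_iff₀ (by positivity)]
  nlinarith [mul_le_mul_of_nonneg_left hn (pow_nonneg (Nat.cast_nonneg (Fintype.card V)) 3)]

/-- The tests in the randomized rounding are the cuts and the edit distance. -/
theorem exists_rounded_graph (G : SimpleGraph V) {w : V × V → ℝ} (hw : ∀ x, w x ∈ Set.Icc 0 1)
    (hw_swap : ∀ x, w x.swap = w x) {η : ℝ} (hη : 0 ≤ η) (hn : 8 ≤ η ^ 2 * Fintype.card V) :
    ∃ G' : SimpleGraph V,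
      (editDist G G' : ℝ) ≤ ∑ x, |w x - adjFun G x| + η * Fintype.card V ^ 2 ∧
      ∀ A B, Disjoint A B →
        |(eCnt G' A B : ℝ) - ∑ x ∈ A ×ˢ B, w x| ≤ η * Fintype.card V ^ 2 := by
  have hpos : 0 < Fintype.card V := Nat.pos_of_ne_zero fun h => by norm_num [h] at hn
  have : Nonempty V := Fintype.card_pos_iff.1 hpos
  let W : Sym2 V → unitInterval :=
    Sym2.lift ⟨fun u v => ⟨w (u, v), hw _⟩, fun u v => Subtype.ext (hw_swap (v, u))⟩
  let a (i : Option (Finset V × Finset V)) (e : Sym2 V) : ℝ :=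
    i.elim (if e ∈ G.edgeSet then -1 else 1)
      fun AB => if e ∈ (AB.1 ×ˢ AB.2).image Sym2.mk.uncurry then 1 else 0
  have ha (i e) : |a i e| ≤ 1 := by
    rcases i with _ | _ <;> simp only [a, Option.elim] <;> split_ifs <;> simp
  have hexp : 2 * Fintype.card (Option (Finset V × Finset V)) *
      Real.exp (-(η * Fintype.card V ^ 2) ^ 2 / (2 * Fintype.card (Sym2 V))) < 1 := by
    have hcard : (Fintype.card (Option (Finset V × Finset V)) : ℝ) = 4 ^ Fintype.card V + 1 := by
      norm_num [← mul_pow]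
    rw [hcard]
    refine lt_of_le_of_lt ?_ (two_mul_four_pow_add_one_mul_exp_lt_one hpos)
    gcongr
    exact neg_sq_div_card_sym2_le hn
  obtain ⟨S, hS⟩ := exists_finset_abs_sum_sub_lt a ha W (t := η * Fintype.card V ^ 2)
    (by positivity) hexp
  refine ⟨.fromEdgeSet S, ?_, fun A B hAB => ?_⟩
  · have hsum : ∑ e, |(W e : ℝ) - if e ∈ G.edgeSet then 1 else 0| ≤ ∑ x, |w x - adjFun G x| :=
      sum_le_sum_comp_of_surjective Sym2.mk_surjective fun e => abs_nonneg _
    have htest := (abs_lt.1 (hS none)).2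
    exact (editDist_fromEdgeSet_le G S fun e => W e).trans (add_le_add hsum htest.le)
  · have htest := hS (some (A, B))
    simp only [a, Option.elim, ← eCnt_fromEdgeSet hAB, mul_ite, mul_one, mul_zero, sum_ite_mem,
      univ_inter, sum_image_sym2Mk hAB] at htest
    exact htest.le

end GraphRounding

/-! ### Flattening the densities -/

section Reweight

variable {p q a : ℝ}

/-- The factor by which `reweight` contracts weights, towards `0` if the density goes down from `q`
to `p` and towards `1` if it goes up. -/
noncomputable def scale (q p : ℝ) : ℝ :=
  if p ≤ q then p / q else (1 - p) / (1 - q)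

/-- The new weight of an edge of weight `a` when the mean weight is to be changed from `q` to `p`.
All weights move in the same direction, so that no change is wasted. -/
noncomputable def reweight (q p a : ℝ) : ℝ :=
  p + scale q p * (a - q)

lemma scale_mem_Icc (hq : q ∈ Set.Icc 0 1) (hp : p ∈ Set.Icc 0 1) : scale q p ∈ Set.Icc 0 1 := by
  rw [scale]
  split_ifs with h
  · exact ⟨div_nonneg hp.1 hq.1, div_le_one_of_le₀ h hq.1⟩
  · exact ⟨div_nonneg (sub_nonneg.2 hp.2) (sub_nonneg.2 hq.2),
      div_le_one_of_le₀ (by linarith) (sub_nonneg.2 hq.2)⟩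

lemma reweight_of_le (hp : 0 ≤ p) (h : p ≤ q) : reweight q p a = scale q p * a := by
  have hscale : scale q p * q = p := by
    rw [scale, if_pos h]
    exact div_mul_cancel_of_imp fun hq => le_antisymm (h.trans hq.le) hp
  rw [reweight]
  linear_combination -hscale

lemma reweight_of_lt (hp : p ≤ 1) (h : q < p) : reweight q p a = 1 - scale q p * (1 - a) := by
  have hscale : scale q p * (1 - q) = 1 - p := by
    rw [scale, if_neg h.not_ge]
    exact div_mul_cancel₀ _ (sub_pos.2 (h.trans_le hp)).ne'
  rw [reweight]
  linear_combination hscale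

lemma reweight_mem_Icc (ha : a ∈ Set.Icc 0 1) (hq : q ∈ Set.Icc 0 1) (hp : p ∈ Set.Icc 0 1) :
    reweight q p a ∈ Set.Icc 0 1 := by
  have hs := scale_mem_Icc hq hp
  rcases le_or_gt p q with h | h
  · rw [reweight_of_le hp.1 h]
    exact unitInterval.mul_mem hs ha
  · rw [reweight_of_lt hp.2 h]
    exact Set.Icc.one_sub_mem (unitInterval.mul_mem hs (Set.Icc.one_sub_mem ha))

lemma abs_reweight_sub (ha : a ∈ Set.Icc 0 1) (hq : q ∈ Set.Icc 0 1) (hp : p ∈ Set.Icc 0 1) :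
    |reweight q p a - a| =
      |q - p| + (a - q) * if p ≤ q then 1 - scale q p else scale q p - 1 := by
  have hs := (scale_mem_Icc hq hp).2
  rcases le_or_gt p q with h | h
  · have hle : reweight q p a ≤ a := by
      rw [reweight_of_le hp.1 h]
      exact mul_le_of_le_one_left ha.1 hs
    rw [abs_of_nonpos (sub_nonpos.2 hle), abs_of_nonneg (sub_nonneg.2 h), if_pos h, reweight]
    ring
  · have hle : a ≤ reweight q p a := by
      rw [reweight_of_lt hp.2 h]
      linarith [mul_le_of_le_one_left (sub_nonneg.2 ha.2) hs]
    rw [abs_of_nonneg (sub_nonneg.2 hle), abs_of_neg (sub_neg.2 h), if_neg h.not_ge, reweight]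
    ring

end Reweight

section Flattening

lemma sum_abs_reweight_sub {X : Type*} [Fintype X] {r : Setoid X} {g b : X → ℝ}
    (hg : ∀ x, g x ∈ Set.Icc 0 1) (hb : ∀ x, b x ∈ Set.Icc 0 1) (hrb : r ≤ Setoid.ker b) :
    ∑ x, |reweight (condAvg r g x) (b x) (g x) - g x| = ∑ x, |condAvg r g x - b x| := by
  have hsign : r ≤ Setoid.ker fun x => if b x ≤ condAvg r g x then
      1 - scale (condAvg r g x) (b x) else scale (condAvg r g x) (b x) - 1 := by
    intro x y hxy
    simp only [Setoid.ker_def, Setoid.ker_def.1 (hrb hxy),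
      Setoid.ker_def.1 (le_ker_condAvg r g hxy)]
  simp only [abs_reweight_sub (hg _) (condAvg_mem_Icc hg r _) (hb _), sum_add_distrib,
    sum_sub_condAvg_mul_eq_zero hsign, add_zero]

variable {V : Type*} [Fintype V]

/-- The density of `G` between the classes of the two entries of a pair, a function that is constant
on products of classes of `r`. -/
noncomputable abbrev cellDensity (G : SimpleGraph V) (r : Setoid V) : V × V → ℝ :=
  condAvg (r.prod r) (adjFun G)

lemma cellDensity_mem_Icc (G : SimpleGraph V) (r : Setoid V) (x : V × V) :
    cellDensity G r x ∈ Set.Icc 0 1 :=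
  condAvg_mem_Icc (adjFun_mem_Icc G) _ x

lemma prod_le_ker_cellDensity (G : SimpleGraph V) {r r₀ : Setoid V} (hr : r ≤ r₀) :
    r.prod r ≤ Setoid.ker (cellDensity G r₀) := fun _ _ hxy =>
  le_ker_condAvg (r₀.prod r₀) (adjFun G) ⟨hr hxy.1, hr hxy.2⟩

lemma abs_sum_reweight_sub_le {r : Setoid V} {g b : V × V → ℝ} {t : ℝ} {A B : Finset V}
    (hcut : CutBounded (fun x => scale (condAvg (r.prod r) g x) (b x) *
      (g x - condAvg (r.prod r) g x)) t) :
    |∑ x ∈ A ×ˢ B, reweight (condAvg (r.prod r) g x) (b x) (g x) - ∑ x ∈ A ×ˢ B, b x| ≤ t := by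
  simpa only [reweight, sum_add_distrib, add_sub_cancel_left] using hcut A B

theorem exists_flattened_graph (G : SimpleGraph V) (r₀ : Setoid V) {ε η : ℝ} (hε : 0 ≤ ε)
    (hη : 0 ≤ η) {T : ℕ} (hT : 1 ≤ T * ε ^ 2) (hn : 8 ≤ η ^ 2 * Fintype.card V) :
    ∃ r ≤ r₀, Nat.card (Quotient r) ≤ Nat.card (Quotient r₀) * 4 ^ T ∧ ∃ G' : SimpleGraph V,
      (editDist G G' : ℝ) ≤ ∑ x, |cellDensity G r x - cellDensity G r₀ x|
        + η * Fintype.card V ^ 2 ∧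
      ∀ A B, Disjoint A B → |(eCnt G' A B : ℝ) - ∑ x ∈ A ×ˢ B, cellDensity G r₀ x|
        ≤ (ε + η) * Fintype.card V ^ 2 := by
  have hb := cellDensity_mem_Icc G r₀
  have hq (r) := cellDensity_mem_Icc G r
  have hscale (r x) := scale_mem_Icc (hq r x) (hb x)
  obtain ⟨r, hr, hcard, hcut⟩ := exists_cutBounded_refinement (r₀ := r₀) (g := adjFun G)
    (β := fun r x => scale (cellDensity G r x) (cellDensity G r₀ x)) hε
    (fun x => ⟨by linarith [(adjFun_mem_Icc G x).1], (adjFun_mem_Icc G x).2⟩)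
    (fun r hr x y hxy =>
      congrArg₂ scale (le_ker_condAvg _ _ hxy) (prod_le_ker_cellDensity G hr hxy))
    (fun r x => abs_le.2 ⟨by linarith [(hscale r x).1], (hscale r x).2⟩) hT
  obtain ⟨G', hedit, hcount⟩ := exists_rounded_graph G
    (w := fun x => reweight (cellDensity G r x) (cellDensity G r₀ x) (adjFun G x))
    (fun x => reweight_mem_Icc (adjFun_mem_Icc G x) (hq r x) (hb x))
    (fun x => by simp only [condAvg_prod_swap (adjFun_swap G), adjFun_swap]) hη hn
  refine ⟨r, hr, hcard, G', ?_, fun A B hAB => ?_⟩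
  · rwa [sum_abs_reweight_sub (adjFun_mem_Icc G) hb (prod_le_ker_cellDensity G hr)] at hedit
  · rw [add_comm ε, add_mul]
    exact (abs_sub_le _ _ _).trans
      (add_le_add (hcount A B hAB) (abs_sum_reweight_sub_le hcut))

end Flattening

/-! ### Approximating a partition by an equipartition -/

section Equipartition

variable {V : Type*}

section PartSetoid

variable [Fintype V] [DecidableEq V] {P Q : Finpartition (univ : Finset V)} {A : Finset V}

/-- The equivalence relation whose classes are the parts of `P`. -/
def partSetoid (P : Finpartition (univ : Finset V)) : Setoid V :=
  Setoid.ker P.part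

lemma partSetoid_iff_of_mem (hA : A ∈ P.parts) {x y : V} (hx : x ∈ A) :
    partSetoid P y x ↔ y ∈ A := by
  rw [partSetoid, Setoid.ker_def, P.part_eq_of_mem hA hx, P.part_eq_iff_mem hA]

lemma partSetoid_mono (h : Q ≤ P) : partSetoid Q ≤ partSetoid P := by
  intro x y hxy
  obtain ⟨A, hA, hsub⟩ := h (Q.part_mem.2 (mem_univ y))
  have hx : x ∈ Q.part y := (Q.mem_part_iff_part_eq_part (mem_univ x) (mem_univ y)).2 hxy
  exact (partSetoid_iff_of_mem hA (hsub (Q.mem_part (mem_univ y)))).2 (hsub hx)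

lemma card_quotient_partSetoid (P : Finpartition (univ : Finset V)) :
    Nat.card (Quotient (partSetoid P)) = #P.parts := by
  have hrange : Set.range P.part = P.parts := by
    ext A
    refine ⟨?_, fun hA => ?_⟩
    · rintro ⟨x, rfl⟩
      exact P.part_mem.2 (mem_univ x)
    · obtain ⟨x, hx⟩ := P.nonempty_of_mem_parts hA
      exact ⟨x, P.part_eq_of_mem hA hx⟩
  rw [partSetoid, Nat.card_congr (Setoid.quotientKerEquivRange P.part), hrange, Nat.card_coe_set_eq,
    Set.ncard_coe_finset]

end PartSetoid

/-- The points whose class with respect to `s` is split by `r`. -/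
noncomputable def splitPoints [Fintype V] (s r : Setoid V) : Finset V :=
  {x | ¬ ∀ y, s y x → r y x}

lemma card_le_card_quotient_mul [Finite V] {r : Setoid V} {S : Finset V} {m : ℕ}
    (hS : ∀ x, #{y ∈ S | r y x} ≤ m) : #S ≤ Nat.card (Quotient r) * m := by
  have := Fintype.ofFinite V
  have hfiber : ∀ c ∈ S.image (Quotient.mk r), #{y ∈ S | Quotient.mk r y = c} ≤ m := by
    refine fun c _ => Quotient.inductionOn c fun x => ?_
    simpa only [Quotient.eq] using hS x
  calc #S ≤ m * #(S.image (Quotient.mk r)) := card_le_mul_card_image S m hfiber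
    _ ≤ m * Nat.card (Quotient r) := by
        gcongr
        exact (card_le_univ _).trans_eq Nat.card_eq_fintype_card.symm
    _ = _ := mul_comm _ _

variable [DecidableEq V]

lemma exists_finpartition_almost_refining (A : Finset V) (r : Setoid V) {a b m : ℕ} (hm : m ≠ 0)
    (hA : a * m + b * (m + 1) = #A) :
    ∃ Q : Finpartition A, (∀ B ∈ Q.parts, #B = m ∨ #B = m + 1) ∧ #Q.parts = a + b ∧
      ∀ x ∈ A, #{y ∈ A | r y x ∧ ¬ ∀ z, z ∈ Q.part y → r z y} ≤ m := by
  refine ⟨(Finpartition.ofSetSetoid r A).equitabilise hA,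
    fun B hB => Finpartition.card_eq_of_mem_parts_equitabilise hB,
    Finpartition.card_parts_equitabilise _ _ hm, fun x hx => ?_⟩
  have hclass := (Finpartition.ofSetSetoid r A).part_mem.2 hx
  refine (card_le_card fun y hy => ?_).trans
    (Finpartition.card_parts_equitabilise_subset_le _ hA hclass)
  obtain ⟨hyA, hyx, hsplit⟩ := mem_filter.1 hy
  refine mem_sdiff.2 ⟨(Finpartition.mem_part_ofSetSetoid_iff_rel A).2 ⟨hx, hyA, r.symm' hyx⟩,
    fun hmem => hsplit fun z hz => ?_⟩
  obtain ⟨B, hB, hyB⟩ := mem_biUnion.1 hmem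
  obtain ⟨hB, hBx⟩ := mem_filter.1 hB
  rw [Finpartition.part_eq_of_mem _ hB hyB] at hz
  have hxz := ((Finpartition.mem_part_ofSetSetoid_iff_rel A).1 (hBx hz)).2.2
  exact r.trans' (r.symm' hxz) (r.symm' hyx)

variable [Fintype V]

lemma exists_refinement_card_splitPoints_le (P : Finpartition (univ : Finset V)) {r : Setoid V}
    (hr : r ≤ partSetoid P) {l m : ℕ} (hm : m ≠ 0)
    (hP : ∀ A ∈ P.parts, ∃ a b, a + b = l ∧ a * m + b * (m + 1) = #A) :
    ∃ Q ≤ P, Q.IsEquipartition ∧ #Q.parts = #P.parts * l ∧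
      #(splitPoints (partSetoid Q) r) ≤ Nat.card (Quotient r) * m := by
  choose! a b hab hsize using hP
  choose! S hScard hSparts hSsplit using fun A hA =>
    exists_finpartition_almost_refining A r hm (hsize A hA)
  let Q := P.bind fun A _ => S A
  refine ⟨Q, fun B hB => ?_, Set.equitableOn_iff_exists_eq_eq_add_one.2 ⟨m, fun B hB => ?_⟩, ?_,
    card_le_card_quotient_mul fun x => ?_⟩
  · obtain ⟨A, hA, hB⟩ := Finpartition.mem_bind.1 hB
    exact ⟨A, hA, (S A).le hB⟩
  · obtain ⟨A, hA, hB⟩ := Finpartition.mem_bind.1 hB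
    exact hScard A hA B hB
  · have hcard : ∀ A ∈ P.parts.attach, #(S A).parts = l := fun A _ =>
      (hSparts A A.2).trans (hab A A.2)
    rw [Finpartition.card_bind, sum_congr rfl hcard, sum_const, card_attach, smul_eq_mul]
  · have hA := P.part_mem.2 (mem_univ x)
    have hx := P.mem_part (mem_univ x)
    refine (card_le_card fun y hy => ?_).trans (hSsplit (P.part x) hA x hx)
    simp only [splitPoints, mem_filter, mem_univ, true_and] at hy ⊢
    have hyA := (partSetoid_iff_of_mem hA hx).1 (hr hy.2)
    refine ⟨hyA, hy.2, fun hcover => hy.1 fun z hz => hcover z ?_⟩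
    have hB := (S (P.part x)).part_mem.2 hyA
    exact (partSetoid_iff_of_mem (Finpartition.mem_bind.2 ⟨_, hA, hB⟩)
      ((S (P.part x)).mem_part hyA)).1 hz

lemma exists_add_eq_mul_add_mul_succ_eq {l m a : ℕ} (h₁ : l * m ≤ a) (h₂ : a ≤ l * m + l) :
    ∃ b c, b + c = l ∧ b * m + c * (m + 1) = a := by
  obtain ⟨c, rfl⟩ := Nat.exists_eq_add_of_le h₁
  obtain ⟨b, rfl⟩ := Nat.exists_eq_add_of_le' (Nat.le_of_add_le_add_left h₂)
  exact ⟨b, c, rfl, by ring⟩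

theorem exists_equipartition_refinement {P : Finpartition (univ : Finset V)}
    (hP : P.IsEquipartition) {r : Setoid V} (hr : r ≤ partSetoid P) {l : ℕ} (hl : 0 < l)
    (hk : 0 < #P.parts) (hn : #P.parts * l ≤ Fintype.card V) :
    ∃ Q ≤ P, Q.IsEquipartition ∧ #Q.parts = #P.parts * l ∧
      #(splitPoints (partSetoid Q) r) * (#P.parts * l)
        ≤ Nat.card (Quotient r) * Fintype.card V := by
  let m := Fintype.card V / (#P.parts * l)
  have hm : m ≠ 0 := (Nat.div_pos hn (Nat.mul_pos hk hl)).ne'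
  have hsize : ∀ A ∈ P.parts, ∃ a b, a + b = l ∧ a * m + b * (m + 1) = #A := by
    intro A hA
    have hm_eq : m = Fintype.card V / #P.parts / l := (Nat.div_div_eq_div_mul _ _ _).symm
    have hdiv := Nat.div_add_mod (Fintype.card V / #P.parts) l
    have hmod := Nat.mod_lt (Fintype.card V / #P.parts) hl
    have havg := hP.card_parts_eq_average hA
    rw [card_univ] at havg
    rw [← hm_eq] at hdiv
    exact exists_add_eq_mul_add_mul_succ_eq (by lia) (by lia)
  obtain ⟨Q, hQP, hQ, hQcard, hsplit⟩ := exists_refinement_card_splitPoints_le P hr hm hsize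
  refine ⟨Q, hQP, hQ, hQcard, ?_⟩
  calc #(splitPoints (partSetoid Q) r) * (#P.parts * l)
      ≤ Nat.card (Quotient r) * m * (#P.parts * l) := by gcongr
    _ = Nat.card (Quotient r) * (m * (#P.parts * l)) := mul_assoc _ _ _
    _ ≤ Nat.card (Quotient r) * Fintype.card V := by
        gcongr
        exact Nat.div_mul_le_self _ _

end Equipartition

section SplitPoints

lemma mem_splitPoints_congr {X : Type*} [Fintype X] {s : Setoid X} (r : Setoid X) {x y : X}
    (hxy : s x y) : x ∈ splitPoints s r ↔ y ∈ splitPoints s r := by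
  have key {x y : X} (hxy : s x y) (h : ∀ z, s z x → r z x) (z : X) (hz : s z y) : r z y :=
    r.trans' (h z (s.trans' hz (s.symm' hxy))) (r.symm' (h y (s.symm' hxy)))
  simp only [splitPoints, mem_filter_univ, not_iff_not]
  exact ⟨key hxy, key (s.symm' hxy)⟩

lemma rel_of_notMem_splitPoints {X : Type*} [Fintype X] {s r : Setoid X} {x y : X}
    (hy : y ∉ splitPoints s r) (hxy : s x y) : r x y := by
  simp only [splitPoints, mem_filter_univ, not_not] at hy
  exact hy x hxy

lemma card_splitPoints_prod_le {V : Type*} [Fintype V] (s r : Setoid V) :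
    #(splitPoints (s.prod s) (r.prod r)) ≤ 2 * #(splitPoints s r) * Fintype.card V := by
  let U := splitPoints s r
  have hsub : splitPoints (s.prod s) (r.prod r) ⊆ U ×ˢ univ ∪ univ ×ˢ U := by
    intro x hx
    by_contra hxU
    simp only [mem_union, mem_product, mem_univ, and_true, true_and, not_or] at hxU
    refine (mem_filter.1 hx).2 fun y hy => ?_
    exact ⟨rel_of_notMem_splitPoints hxU.1 hy.1, rel_of_notMem_splitPoints hxU.2 hy.2⟩
  calc #(splitPoints (s.prod s) (r.prod r))
      ≤ #(U ×ˢ (univ : Finset V)) + #((univ : Finset V) ×ˢ U) :=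
        (card_le_card hsub).trans (card_union_le _ _)
    _ = 2 * #U * Fintype.card V := by
        rw [card_product, card_product, card_univ]
        ring

/-- Test `g - b` against the sign of `condAvg r g - b`, set to zero on the split points. -/
theorem sum_abs_condAvg_sub_le_add_card_splitPoints {X : Type*} [Fintype X] {r : Setoid X}
    {g b : X → ℝ} (hg : ∀ x, g x ∈ Set.Icc 0 1) (hb : ∀ x, b x ∈ Set.Icc 0 1)
    (hrb : r ≤ Setoid.ker b) (s : Setoid X) :
    ∑ x, |condAvg r g x - b x| ≤ ∑ x, |condAvg s g x - b x| + #(splitPoints s r) := by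
  let U := splitPoints s r
  let σ (x : X) : ℝ := if b x ≤ condAvg r g x then 1 else -1
  let τ (x : X) : ℝ := if x ∈ U then 0 else σ x
  have hσ : r ≤ Setoid.ker σ := by
    intro x y hxy
    simp only [Setoid.ker_def, σ, Setoid.ker_def.1 (hrb hxy),
      Setoid.ker_def.1 (le_ker_condAvg r g hxy)]
  have hτ : s ≤ Setoid.ker τ := by
    intro x y hxy
    by_cases hy : y ∈ U
    · simp [τ, U, (mem_splitPoints_congr r hxy).2 hy, hy]
    · simpa [τ, U, mem_splitPoints_congr r hxy, hy] using hσ (rel_of_notMem_splitPoints hy hxy)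
  have hsign (x : X) : |condAvg r g x - b x| = (condAvg r g x - b x) * σ x := by
    simp only [σ]
    split_ifs with h
    · rw [abs_of_nonneg (sub_nonneg.2 h), mul_one]
    · rw [abs_of_neg (sub_neg.2 (not_le.1 h)), mul_neg_one]
  have habs (x : X) : |σ x| = 1 ∧ |τ x| ≤ 1 := by
    simp only [σ, τ]
    split_ifs <;> simp
  calc ∑ x, |condAvg r g x - b x|
      = ∑ x, (g x - b x) * σ x := by
        simp only [hsign, sub_mul, sum_sub_distrib, sum_condAvg_mul hσ]
    _ ≤ ∑ x, ((g x - b x) * τ x + if x ∈ U then 1 else 0) := by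
        refine sum_le_sum fun x _ => ?_
        simp only [τ]
        split_ifs
        · rw [mul_zero, zero_add]
          refine (le_abs_self _).trans ?_
          rw [abs_mul, (habs x).1, mul_one]
          exact Real.dist_le_of_mem_Icc_01 (hg x) (hb x)
        · rw [add_zero]
    _ = ∑ x, (condAvg s g x - b x) * τ x + #U := by
        simp only [sum_add_distrib, sub_mul, sum_sub_distrib, sum_condAvg_mul hτ]
        simp
    _ ≤ ∑ x, |condAvg s g x - b x| + #U := by
        gcongr with x
        refine (le_abs_self _).trans ?_
        rw [abs_mul]
        exact mul_le_of_le_one_right (abs_nonneg _) (habs x).2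

lemma sum_abs_cellDensity_sub_le {V : Type*} [Fintype V] (G : SimpleGraph V) {r r₀ : Setoid V}
    (hr : r ≤ r₀) (s : Setoid V) :
    ∑ x, |cellDensity G r x - cellDensity G r₀ x| ≤
      ∑ x, |cellDensity G s x - cellDensity G r₀ x|
        + 2 * #(splitPoints s r) * Fintype.card V := by
  refine (sum_abs_condAvg_sub_le_add_card_splitPoints (adjFun_mem_Icc G) (cellDensity_mem_Icc G r₀)
    (prod_le_ker_cellDensity G hr) (s.prod s)).trans ?_
  gcongr
  exact_mod_cast card_splitPoints_prod_le s r

end SplitPoints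

/-! ### Regular pairs and partitions -/

section RegularPair

variable {V : Type*} [Fintype V] {G : SimpleGraph V} {A B : Finset V} {d ε t : ℝ}

lemma abs_dens_sub_le (hA : A.Nonempty) (hB : B.Nonempty)
    (h : |(eCnt G A B : ℝ) - d * (#A * #B)| ≤ ε * (#A * #B)) : |_root_.dens G A B - d| ≤ ε := by
  have hpos : (0 : ℝ) < #A * #B := mod_cast Nat.mul_pos hA.card_pos hB.card_pos
  rw [_root_.dens, div_sub' hpos.ne', abs_div, abs_of_pos hpos, div_le_iff₀ hpos, mul_comm _ d]
  exact h

theorem regPair_of_abs_eCnt_sub_le (hA : A.Nonempty) (hB : B.Nonempty) (hε : ε ∈ Set.Ioo 0 1)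
    (ht : 2 * t ≤ ε ^ 3 * (#A * #B))
    (h : ∀ A' ⊆ A, ∀ B' ⊆ B, |(eCnt G A' B' : ℝ) - d * (#A' * #B')| ≤ t) : RegPair G ε A B := by
  have hA0 : (0 : ℝ) < #A := mod_cast hA.card_pos
  have hB0 : (0 : ℝ) < #B := mod_cast hB.card_pos
  have hε0 : 0 < ε := hε.1
  have key : ∀ A' ⊆ A, ∀ B' ⊆ B, ε * #A ≤ #A' → ε * #B ≤ #B' →
      |_root_.dens G A' B' - d| ≤ ε / 2 := by
    intro A' hA' B' hB' hcardA hcardB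
    have hA'0 : (0 : ℝ) < #A' := (by positivity : 0 < ε * #A).trans_le hcardA
    have hB'0 : (0 : ℝ) < #B' := (by positivity : 0 < ε * #B).trans_le hcardB
    refine abs_dens_sub_le (card_pos.1 (mod_cast hA'0)) (card_pos.1 (mod_cast hB'0)) ?_
    calc |(eCnt G A' B' : ℝ) - d * (#A' * #B')| ≤ t := h A' hA' B' hB'
      _ ≤ ε / 2 * ((ε * #A) * (ε * #B)) := by linarith
      _ ≤ ε / 2 * (#A' * #B') := by gcongr
  intro A' hA' B' hB' hcardA hcardB
  calc |_root_.dens G A B - _root_.dens G A' B'|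
      ≤ |_root_.dens G A B - d| + |d - _root_.dens G A' B'| := abs_sub_le _ _ _
    _ ≤ ε / 2 + ε / 2 := by
        rw [abs_sub_comm d]
        exact add_le_add (key A Subset.rfl B Subset.rfl (mul_le_of_le_one_left hA0.le hε.2.le)
          (mul_le_of_le_one_left hB0.le hε.2.le)) (key A' hA' B' hB' hcardA hcardB)
    _ = ε := add_halves ε

lemma regPair_of_adjFun_eq (hA : A.Nonempty) (hB : B.Nonempty) (hε : ε ∈ Set.Ioo 0 1)
    (h : ∀ a ∈ A, ∀ b ∈ B, adjFun G (a, b) = d) : RegPair G ε A B := by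
  have hε0 : 0 < ε := hε.1
  refine regPair_of_abs_eCnt_sub_le (d := d) (t := 0) hA hB hε (by rw [mul_zero]; positivity)
    fun A' hA' B' hB' => ?_
  have hconst : ∀ x ∈ A' ×ˢ B', adjFun G x = d := fun x hx =>
    h _ (hA' (mem_product.1 hx).1) _ (hB' (mem_product.1 hx).2)
  rw [eCnt_eq_sum, sum_congr rfl hconst, sum_const, card_product, nsmul_eq_mul]
  push_cast
  rw [mul_comm d, sub_self, abs_zero]

end RegularPair

section RegularPartition

variable {V : Type*} [Fintype V] {G : SimpleGraph V} {ε t : ℝ}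

lemma graphDensity_nonneg (G : SimpleGraph V) : 0 ≤ graphDensity G := by
  unfold graphDensity
  positivity

lemma sum_adjFun (G : SimpleGraph V) : ∑ x, adjFun G x = 2 * (G.edgeSet.ncard : ℝ) := by
  have hdeg : ∑ x, adjFun G x = ((∑ v, G.degree v : ℕ) : ℝ) := by
    rw [Fintype.sum_prod_type]
    push_cast
    refine sum_congr rfl fun v _ => ?_
    simp only [adjFun, sum_boole, ← SimpleGraph.card_neighborFinset_eq_degree,
      SimpleGraph.neighborFinset_eq_filter]
  rw [hdeg, G.sum_degrees_eq_twice_card_edges, ← SimpleGraph.coe_edgeFinset, Set.ncard_coe_finset]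
  push_cast
  rfl

lemma sum_adjFun_eq_graphDensity_mul (G : SimpleGraph V) :
    ∑ x, adjFun G x = graphDensity G * (Fintype.card V : ℝ) ^ 2 := by
  rcases isEmpty_or_nonempty V with hV | hV
  · simp
  · rw [sum_adjFun, graphDensity, div_mul_cancel₀ _ (by positivity)]

lemma expect_adjFun (G : SimpleGraph V) : 𝔼 x, adjFun G x = graphDensity G := by
  rw [Fintype.expect_eq_sum_div_card, sum_adjFun, Fintype.card_prod, graphDensity]
  push_cast
  rw [sq]

variable [DecidableEq V] {P : Finpartition (univ : Finset V)} {A : Finset V}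

/-- Every pair of distinct parts of `P` is `ε`-regular in `G`. An `f`-regular partition is the case
`ε = f #P.parts`. -/
def IsRegularPartition (G : SimpleGraph V) (ε : ℝ) (P : Finpartition (univ : Finset V)) : Prop :=
  ∀ A ∈ P.parts, ∀ B ∈ P.parts, A ≠ B → RegPair G ε A B

lemma card_le_two_mul_card_parts_mul_card (hP : P.IsEquipartition) (hA : A ∈ P.parts) :
    Fintype.card V ≤ 2 * #P.parts * #A := by
  have hk : 0 < #P.parts := card_pos.2 ⟨A, hA⟩
  have hquot : Fintype.card V / #P.parts ≤ #A := hP.average_le_card_part hA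
  have hone : 1 ≤ Fintype.card V / #P.parts := Nat.div_pos P.card_parts_le_card hk
  have hmod := Nat.mod_lt (Fintype.card V) hk
  calc Fintype.card V
      = #P.parts * (Fintype.card V / #P.parts) + Fintype.card V % #P.parts :=
        (Nat.div_add_mod _ _).symm
    _ ≤ #P.parts * #A + #P.parts * #A :=
        add_le_add (Nat.mul_le_mul_left _ hquot)
          (hmod.le.trans (Nat.le_mul_of_pos_right _ (hone.trans hquot)))
    _ = 2 * #P.parts * #A := by ring

theorem isRegularPartition_of_abs_eCnt_sub_le {G' : SimpleGraph V} (hP : P.IsEquipartition)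
    (hε : ε ∈ Set.Ioo 0 1) (ht : 8 * t * (#P.parts : ℝ) ^ 2 ≤ ε ^ 3 * (Fintype.card V : ℝ) ^ 2)
    (h : ∀ A B, Disjoint A B →
      |(eCnt G' A B : ℝ) - ∑ x ∈ A ×ˢ B, cellDensity G (partSetoid P) x| ≤ t) :
    IsRegularPartition G' ε P := by
  intro A hA B hB hAB
  obtain ⟨a, ha⟩ := P.nonempty_of_mem_parts hA
  obtain ⟨b, hb⟩ := P.nonempty_of_mem_parts hB
  have hε0 : 0 < ε := hε.1
  have hk : (0 : ℝ) < #P.parts := mod_cast card_pos.2 ⟨A, hA⟩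
  have hsize {A : Finset V} (hA : A ∈ P.parts) : (Fintype.card V : ℝ) ≤ 2 * #P.parts * #A :=
    mod_cast card_le_two_mul_card_parts_mul_card hP hA
  refine regPair_of_abs_eCnt_sub_le (d := cellDensity G (partSetoid P) (a, b)) (t := t)
    ⟨a, ha⟩ ⟨b, hb⟩ hε ?_ fun A' hA' B' hB' => ?_
  · refine le_of_mul_le_mul_right ?_ (by positivity : (0 : ℝ) < 4 * (#P.parts : ℝ) ^ 2)
    calc 2 * t * (4 * (#P.parts : ℝ) ^ 2)
        = 8 * t * (#P.parts : ℝ) ^ 2 := by ring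
      _ ≤ ε ^ 3 * (Fintype.card V : ℝ) ^ 2 := ht
      _ = ε ^ 3 * (Fintype.card V * Fintype.card V) := by rw [sq]
      _ ≤ ε ^ 3 * ((2 * #P.parts * #A) * (2 * #P.parts * #B)) := by
          gcongr
          exacts [hsize hA, hsize hB]
      _ = ε ^ 3 * (#A * #B) * (4 * (#P.parts : ℝ) ^ 2) := by ring
  · have hdisj : Disjoint A' B' := (P.disjoint hA hB hAB).mono hA' hB'
    have hconst : ∀ x ∈ A' ×ˢ B', cellDensity G (partSetoid P) x =
        cellDensity G (partSetoid P) (a, b) := fun x hx =>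
      prod_le_ker_cellDensity G le_rfl
        ⟨(partSetoid_iff_of_mem hA ha).2 (hA' (mem_product.1 hx).1),
          (partSetoid_iff_of_mem hB hb).2 (hB' (mem_product.1 hx).2)⟩
    have hcut := h A' B' hdisj
    rw [sum_congr rfl hconst, sum_const, card_product, nsmul_eq_mul, mul_comm] at hcut
    exact_mod_cast hcut

end RegularPartition

/-! ### The entropy increment -/

section Increment

lemma entropy_add_le_of_le_sum_abs_condAvg_sub {X : Type*} [Fintype X] {r r' : Setoid X} {g : X → ℝ}
    {c : ℝ} (hg : ∀ x, 0 ≤ g x) (hr : r' ≤ r) (hc : 0 ≤ c)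
    (h : c * ∑ x, g x ≤ ∑ x, |condAvg r' g x - condAvg r g x|) :
    entropy r' g + c ^ 2 / 4 * ∑ x, g x ≤ entropy r g := by
  rcases (sum_nonneg fun x _ => hg x).eq_or_lt with hzero | hpos
  · rw [← hzero, mul_zero, add_zero]
    exact entropy_anti hg hr
  · have hsq : (c * ∑ x, g x) ^ 2 ≤ 4 * (∑ x, g x) * (entropy r g - entropy r' g) :=
      (pow_le_pow_left₀ (by positivity) h 2).trans (sq_sum_abs_condAvg_sub_le hg hr)
    have hgain : c ^ 2 / 4 * ∑ x, g x ≤ entropy r g - entropy r' g := by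
      refine le_of_mul_le_mul_left ?_ (by positivity : 0 < 4 * ∑ x, g x)
      calc 4 * (∑ x, g x) * (c ^ 2 / 4 * ∑ x, g x) = (c * ∑ x, g x) ^ 2 := by ring
        _ ≤ _ := hsq
    linarith

variable {V : Type*} [Fintype V] [DecidableEq V] {P : Finpartition (univ : Finset V)}

theorem exists_flattened_graph_or_refinement (G : SimpleGraph V) (hP : P.IsEquipartition)
    (hk : 0 < #P.parts) {ε : ℝ} {T : ℕ} (c : ℝ) (hε : 0 ≤ ε) (hT : 1 ≤ T * ε ^ 2)
    (hn : 8 ≤ ε ^ 2 * Fintype.card V) (hcard : #P.parts * (4 ^ T * #P.parts) ≤ Fintype.card V) :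
    (∃ G' : SimpleGraph V, (editDist G G' : ℝ) ≤ c + ε * (Fintype.card V : ℝ) ^ 2 ∧
      ∀ A B, Disjoint A B →
        |(eCnt G' A B : ℝ) - ∑ x ∈ A ×ˢ B, cellDensity G (partSetoid P) x|
          ≤ 2 * ε * (Fintype.card V : ℝ) ^ 2) ∨
    ∃ Q ≤ P, Q.IsEquipartition ∧ #Q.parts = #P.parts * (4 ^ T * #P.parts) ∧
      c ≤ ∑ x, |cellDensity G (partSetoid Q) x - cellDensity G (partSetoid P) x|
        + 2 * (Fintype.card V : ℝ) ^ 2 / #P.parts := by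
  obtain ⟨r, hr, hclasses, G', hedit, hcut⟩ :=
    exists_flattened_graph G (partSetoid P) hε hε hT hn
  rw [card_quotient_partSetoid] at hclasses
  rcases le_total (∑ x, |cellDensity G r x - cellDensity G (partSetoid P) x|) c with hc | hc
  · refine .inl ⟨G', hedit.trans (by gcongr), fun A B hAB => ?_⟩
    rw [two_mul]
    exact hcut A B hAB
  · obtain ⟨Q, hQP, hQ, hQcard, hsplit⟩ := exists_equipartition_refinement hP hr
      (Nat.mul_pos (by positivity) hk : 0 < 4 ^ T * #P.parts) hk hcard
    refine .inr ⟨Q, hQP, hQ, hQcard, hc.trans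
      ((sum_abs_cellDensity_sub_le G hr (partSetoid Q)).trans ?_)⟩
    have hsplit' : #(splitPoints (partSetoid Q) r) * #P.parts ≤ Fintype.card V := by
      refine Nat.le_of_mul_le_mul_right ?_ (Nat.mul_pos hk (by positivity) : 0 < #P.parts * 4 ^ T)
      calc #(splitPoints (partSetoid Q) r) * #P.parts * (#P.parts * 4 ^ T)
          = #(splitPoints (partSetoid Q) r) * (#P.parts * (4 ^ T * #P.parts)) := by ring
        _ ≤ Nat.card (Quotient r) * Fintype.card V := hsplit
        _ ≤ #P.parts * 4 ^ T * Fintype.card V := Nat.mul_le_mul_right _ hclasses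
        _ = Fintype.card V * (#P.parts * 4 ^ T) := mul_comm _ _
    have hk' : (0 : ℝ) < #P.parts := mod_cast hk
    gcongr
    rw [le_div_iff₀ hk']
    calc 2 * (#(splitPoints (partSetoid Q) r) : ℝ) * Fintype.card V * #P.parts
        = 2 * (#(splitPoints (partSetoid Q) r) * #P.parts) * Fintype.card V := by ring
      _ ≤ 2 * Fintype.card V * Fintype.card V := by
          gcongr
          exact_mod_cast hsplit'
      _ = 2 * (Fintype.card V : ℝ) ^ 2 := by ring

lemma pow_eight_le_two_rpow {y : ℝ} (hy : 256 ≤ y) : y ^ 8 ≤ (2 : ℝ) ^ y := by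
  have hroot : y / 16 ≤ (2 : ℝ) ^ (y / 16) := by
    have h := one_add_mul_self_le_rpow_one_add (s := 1) (by norm_num) (by linarith : 1 ≤ y / 16)
    norm_num at h ⊢
    linarith
  calc y ^ 8 ≤ y ^ 8 * (y / 256) ^ 8 :=
        le_mul_of_one_le_right (by positivity) (one_le_pow₀ (by linarith))
    _ = (y / 16) ^ 16 := by ring
    _ ≤ ((2 : ℝ) ^ (y / 16)) ^ 16 := by gcongr
    _ = (2 : ℝ) ^ y := by
        rw [← Real.rpow_mul_natCast (by norm_num)]
        congr 1
        push_cast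
        ring

lemma exists_weak_regularity_parameters {y : ℝ} (hy : 256 ≤ y) :
    ∃ (ε : ℝ) (T : ℕ), 0 ≤ ε ∧ 16 * ε * y ^ 3 ≤ 1 ∧ 1 ≤ T * ε ^ 2 ∧
      8 ≤ ε ^ 2 * (2 : ℝ) ^ (2 : ℝ) ^ y ∧ y * (4 ^ T * y) ≤ (2 : ℝ) ^ (2 : ℝ) ^ y := by
  have hy0 : 0 < y := by linarith
  have hpow : y ^ 8 ≤ (2 : ℝ) ^ y := pow_eight_le_two_rpow hy
  have hy_le : y ≤ (2 : ℝ) ^ y := (le_self_pow₀ (by linarith) (by norm_num)).trans hpow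
  have hpow_six : 65536 * y ^ 6 ≤ y ^ 8 := by
    calc 65536 * y ^ 6 = 256 ^ 2 * y ^ 6 := by norm_num
      _ ≤ y ^ 2 * y ^ 6 := by gcongr
      _ = y ^ 8 := by ring
  have hy_le_six : y ≤ y ^ 6 := le_self_pow₀ (by linarith) (by norm_num)
  have hsq : (1 / (16 * y ^ 3)) ^ 2 = 1 / (256 * y ^ 6) := by field_simp; norm_num
  refine ⟨1 / (16 * y ^ 3), ⌈256 * y ^ 6⌉₊, by positivity, le_of_eq (by field_simp), ?_, ?_, ?_⟩
  · rw [hsq, mul_one_div, one_le_div (by positivity)]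
    exact Nat.le_ceil _
  · rw [hsq, one_div_mul_eq_div, le_div_iff₀ (by positivity)]
    calc 8 * (256 * y ^ 6) ≤ y ^ 8 := by linarith [pow_pos hy0 6]
      _ ≤ (2 : ℝ) ^ y := hpow
      _ ≤ (2 : ℝ) ^ (2 : ℝ) ^ y := by gcongr; norm_num
  · have hT : (⌈256 * y ^ 6⌉₊ : ℝ) ≤ 256 * y ^ 6 + 1 := (Nat.ceil_lt_add_one (by positivity)).le
    have hfour : (4 : ℝ) ^ ⌈256 * y ^ 6⌉₊ = (2 : ℝ) ^ (2 * (⌈256 * y ^ 6⌉₊ : ℝ)) := by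
      rw [Real.rpow_mul (by norm_num), Real.rpow_natCast]
      norm_num
    calc y * (4 ^ ⌈256 * y ^ 6⌉₊ * y)
        ≤ (2 : ℝ) ^ y * ((2 : ℝ) ^ (2 * (⌈256 * y ^ 6⌉₊ : ℝ)) * (2 : ℝ) ^ y) := by
          rw [hfour]
          gcongr
      _ = (2 : ℝ) ^ (y + (2 * (⌈256 * y ^ 6⌉₊ : ℝ) + y)) := by
          rw [Real.rpow_add (by norm_num), Real.rpow_add (by norm_num)]
      _ ≤ (2 : ℝ) ^ (2 : ℝ) ^ y := by
          gcongr
          · norm_num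
          · linarith

lemma exists_increment_parameters {k ε θ : ℝ} (hk : 256 ≤ k) (hε : ε ∈ Set.Ioo 0 1)
    (hθ : 16 ≤ k * θ) :
    ∃ (η : ℝ) (T : ℕ), 0 ≤ η ∧ 16 * η * k ^ 2 ≤ ε ^ 3 ∧ 4 * η ≤ θ ∧ 1 ≤ T * η ^ 2 ∧
      8 ≤ η ^ 2 * (2 : ℝ) ^ (2 : ℝ) ^ (k / ε) ∧
      k * (4 ^ T * k) ≤ (2 : ℝ) ^ (2 : ℝ) ^ (k / ε) := by
  have hε0 : 0 < ε := hε.1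
  have hky : k ≤ k / ε := le_div_self (by linarith) hε0 hε.2.le
  obtain ⟨η, T, hη, hηy, hT, hηn, hcard⟩ := exists_weak_regularity_parameters (hk.trans hky)
  refine ⟨η, T, hη, ?_, ?_, hT, hηn, hcard.trans' (by gcongr)⟩
  · have hk1 : 1 ≤ k := by linarith
    calc 16 * η * k ^ 2 ≤ 16 * η * k ^ 2 * k := le_mul_of_one_le_right (by positivity) hk1
      _ = 16 * η * (k / ε) ^ 3 * ε ^ 3 := by field_simp
      _ ≤ ε ^ 3 := mul_le_of_le_one_left (by positivity) hηy
  · have hθ0 : 0 < θ := pos_of_mul_pos_right (by linarith : 0 < k * θ) (by linarith)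
    have hy : 1 ≤ k / ε := by linarith
    refine le_of_mul_le_mul_right ?_ (by linarith : 0 < k / ε)
    calc 4 * η * (k / ε) ≤ 16 * η * (k / ε) ^ 3 := by
          gcongr
          · norm_num
          · exact le_self_pow₀ hy (by norm_num)
      _ ≤ k * θ := by linarith
      _ ≤ θ * (k / ε) := by rw [mul_comm]; gcongr

/-- The entropy of the densities of `G` between the parts of `P`. -/
noncomputable abbrev cellEntropy (G : SimpleGraph V) (P : Finpartition (univ : Finset V)) : ℝ :=
  entropy ((partSetoid P).prod (partSetoid P)) (adjFun G)

lemma cellEntropy_le (G : SimpleGraph V) (P : Finpartition (univ : Finset V)) :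
    cellEntropy G P ≤ Real.log (1 / graphDensity G) * ∑ x, adjFun G x := by
  refine (entropy_le (fun x => (adjFun_mem_Icc G x).1) _).trans_eq ?_
  rw [expect_adjFun, sum_adjFun_eq_graphDensity_mul, Real.negMulLog, one_div, Real.log_inv,
    Fintype.card_prod]
  push_cast
  ring

lemma cellEntropy_add_le (G : SimpleGraph V) {Q : Finpartition (univ : Finset V)} (hQP : Q ≤ P)
    {c : ℝ} (hc : 0 ≤ c) (h : c * ∑ x, adjFun G x ≤
      ∑ x, |cellDensity G (partSetoid Q) x - cellDensity G (partSetoid P) x|) :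
    cellEntropy G Q + c ^ 2 / 4 * ∑ x, adjFun G x ≤ cellEntropy G P :=
  entropy_add_le_of_le_sum_abs_condAvg_sub (fun x => (adjFun_mem_Icc G x).1)
    (fun _ _ hxy => ⟨partSetoid_mono hQP hxy.1, partSetoid_mono hQP hxy.2⟩) hc h

theorem exists_regular_graph_or_cellEntropy_add_le (G : SimpleGraph V) (hP : P.IsEquipartition)
    {δ ε : ℝ} (hδ : 0 < δ) (hε : ε ∈ Set.Ioo 0 1) (hk : 256 ≤ #P.parts)
    (hkδ : 16 ≤ #P.parts * (δ * graphDensity G))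
    (hn : (2 : ℝ) ^ (2 : ℝ) ^ (#P.parts / ε) ≤ Fintype.card V) :
    (∃ G' : SimpleGraph V, (editDist G G' : ℝ) ≤ δ * G.edgeSet.ncard ∧
      IsRegularPartition G' ε P) ∨
    ∃ Q ≤ P, Q.IsEquipartition ∧ #P.parts ≤ #Q.parts ∧
      (#Q.parts : ℝ) ≤ (2 : ℝ) ^ (2 : ℝ) ^ (#P.parts / ε) ∧
      cellEntropy G Q + δ ^ 2 / 256 * ∑ x, adjFun G x ≤ cellEntropy G P := by
  have hk' : (256 : ℝ) ≤ #P.parts := mod_cast hk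
  obtain ⟨η, T, hη, hηε, hηδ, hT, hηn, hcard⟩ := exists_increment_parameters hk' hε hkδ
  set k := #P.parts
  set n := Fintype.card V
  set p := graphDensity G
  have hsum : ∑ x, adjFun G x = p * (n : ℝ) ^ 2 := sum_adjFun_eq_graphDensity_mul G
  rcases exists_flattened_graph_or_refinement G hP (by omega) (δ / 4 * ∑ x, adjFun G x) hη hT
    (hηn.trans (by gcongr)) (by exact_mod_cast hcard.trans hn) with
    ⟨G', hedit, hcut⟩ | ⟨Q, hQP, hQ, hQcard, hdist⟩
  · refine .inl ⟨G', hedit.trans ?_, isRegularPartition_of_abs_eCnt_sub_le hP hε ?_ hcut⟩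
    · have hround : 4 * η * (n : ℝ) ^ 2 ≤ δ * ∑ x, adjFun G x := by
        rw [hsum, ← mul_assoc]
        gcongr
      have hdouble : δ * ∑ x, adjFun G x = 2 * (δ * G.edgeSet.ncard) := by
        rw [sum_adjFun, mul_left_comm]
      linarith
    · calc 8 * (2 * η * (n : ℝ) ^ 2) * k ^ 2 = 16 * η * k ^ 2 * n ^ 2 := by ring
        _ ≤ ε ^ 3 * n ^ 2 := by gcongr
  · refine .inr ⟨Q, hQP, hQ, ?_, ?_, ?_⟩
    · rw [hQcard]
      exact Nat.le_mul_of_pos_right _ (Nat.mul_pos (by positivity) (by omega))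
    · rw [hQcard]
      exact_mod_cast hcard
    · have hloss : 2 * (n : ℝ) ^ 2 / k ≤ δ / 8 * ∑ x, adjFun G x := by
        rw [hsum, div_le_iff₀ (by linarith)]
        calc 2 * (n : ℝ) ^ 2 = 16 / 8 * n ^ 2 := by norm_num
          _ ≤ k * (δ * p) / 8 * n ^ 2 := by gcongr
          _ = δ / 8 * (p * n ^ 2) * k := by ring
      have hgain := cellEntropy_add_le G hQP (c := δ / 8) (by positivity) (by linarith)
      linarith

end Increment

/-! ### Iterating the increment -/

section TowerStep

variable {f : ℕ → ℝ}

/-- The function `F(x) = 2 ^ (x / f x)`, rounded up to an integer. -/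
noncomputable def towerStep (f : ℕ → ℝ) (x : ℕ) : ℕ := ⌈(2 : ℝ) ^ ((x : ℝ) / f x)⌉₊

lemma two_pow_le_towerStep (hf : ∀ n, f n ∈ Set.Ioo (0 : ℝ) 1) (x : ℕ) :
    2 ^ x ≤ towerStep f x := by
  have hle : (2 : ℝ) ^ (x : ℝ) ≤ 2 ^ ((x : ℝ) / f x) := by
    gcongr
    · norm_num
    · exact le_div_self (Nat.cast_nonneg x) (hf x).1 (hf x).2.le
  rw [Real.rpow_natCast] at hle
  exact_mod_cast hle.trans (Nat.le_ceil _)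

lemma two_mul_le_towerStep (hf : ∀ n, f n ∈ Set.Ioo (0 : ℝ) 1) (x : ℕ) :
    2 * x ≤ towerStep f x := by
  refine le_trans ?_ (two_pow_le_towerStep hf x)
  cases x with
  | zero => simp
  | succ x => rw [pow_succ']; exact Nat.mul_le_mul_left 2 Nat.lt_two_pow_self

lemma towerStep_mono (hf : ∀ n, f n ∈ Set.Ioo (0 : ℝ) 1) (hanti : Antitone f) :
    Monotone (towerStep f) := fun x y hxy =>
  Nat.ceil_mono (Real.rpow_le_rpow_of_exponent_le (by norm_num)
    (div_le_div₀ (Nat.cast_nonneg y) (mod_cast hxy) (hf y).1 (hanti hxy)))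

lemma monotone_iterate_towerStep (hf : ∀ n, f n ∈ Set.Ioo (0 : ℝ) 1) (s : ℕ) :
    Monotone fun j => (towerStep f)^[j] s :=
  fun _ _ hij => Function.monotone_iterate_of_id_le
    (fun x => (Nat.le_mul_of_pos_left x two_pos).trans (two_mul_le_towerStep hf x)) hij s

lemma mul_two_pow_le_iterate_towerStep (hf : ∀ n, f n ∈ Set.Ioo (0 : ℝ) 1) (s j : ℕ) :
    s * 2 ^ j ≤ (towerStep f)^[j] s := by
  induction j with
  | zero => simp
  | succ j ih =>
    rw [Function.iterate_succ_apply']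
    calc s * 2 ^ (j + 1) = 2 * (s * 2 ^ j) := by ring
      _ ≤ 2 * (towerStep f)^[j] s := Nat.mul_le_mul_left 2 ih
      _ ≤ towerStep f ((towerStep f)^[j] s) := two_mul_le_towerStep hf _

lemma two_rpow_two_rpow_le_iterate_towerStep (hf : ∀ n, f n ∈ Set.Ioo (0 : ℝ) 1) (k : ℕ) :
    (2 : ℝ) ^ (2 : ℝ) ^ ((k : ℝ) / f k) ≤ (towerStep f)^[2] k := by
  calc (2 : ℝ) ^ (2 : ℝ) ^ ((k : ℝ) / f k) ≤ (2 : ℝ) ^ (towerStep f k : ℝ) := by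
        gcongr
        · norm_num
        · exact Nat.le_ceil _
    _ = ((2 ^ towerStep f k : ℕ) : ℝ) := by rw [Real.rpow_natCast]; norm_cast
    _ ≤ (towerStep f)^[2] k := mod_cast two_pow_le_towerStep hf _

end TowerStep

section Iteration

variable {V : Type*} [Fintype V] [DecidableEq V]

/-- `G` can be changed in at most `δ |E(G)|` edges so that it has an `f`-regular equipartition
refining `P₀`, of order at most `N`. -/
def HasRegularApprox (G : SimpleGraph V) (f : ℕ → ℝ) (δ : ℝ) (P₀ : Finpartition (univ : Finset V))
    (N : ℕ) : Prop :=
  ∃ G' : SimpleGraph V, (editDist G G' : ℝ) ≤ δ * G.edgeSet.ncard ∧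
    ∃ Z : Finpartition (univ : Finset V), Z.IsEquipartition ∧ Z ≤ P₀ ∧
      IsRegularPartition G' (f #Z.parts) Z ∧ #Z.parts ≤ N

variable {G : SimpleGraph V} {f : ℕ → ℝ} {δ : ℝ}

lemma HasRegularApprox.mono {P₀ P₁ : Finpartition (univ : Finset V)} {N₀ N₁ : ℕ}
    (h : HasRegularApprox G f δ P₁ N₁) (hP : P₁ ≤ P₀) (hN : N₁ ≤ N₀) :
    HasRegularApprox G f δ P₀ N₀ := by
  obtain ⟨G', hedit, Z, hZ, hZP, hreg, hcard⟩ := h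
  exact ⟨G', hedit, Z, hZ, hZP.trans hP, hreg, hcard.trans hN⟩

theorem hasRegularApprox_of_cellEntropy_lt (hδ : 0 < δ) (hf : ∀ n, f n ∈ Set.Ioo (0 : ℝ) 1)
    (hanti : Antitone f) (t : ℕ) {P : Finpartition (univ : Finset V)} (hP : P.IsEquipartition)
    (hk : 256 ≤ #P.parts) (hkδ : 16 ≤ #P.parts * (δ * graphDensity G))
    (hn : (towerStep f)^[2 * t] #P.parts ≤ Fintype.card V)
    (hent : cellEntropy G P < t * (δ ^ 2 / 256 * ∑ x, adjFun G x)) :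
    HasRegularApprox G f δ P ((towerStep f)^[2 * t] #P.parts) := by
  induction t generalizing P with
  | zero =>
    rw [Nat.cast_zero, zero_mul] at hent
    exact absurd (entropy_nonneg (adjFun_mem_Icc G) _) hent.not_ge
  | succ t ih =>
    rw [mul_add_one, Function.iterate_add_apply] at hn ⊢
    have hgrow (x) : x ≤ (towerStep f)^[2 * t] x := monotone_iterate_towerStep hf x (Nat.zero_le _)
    have hle := two_rpow_two_rpow_le_iterate_towerStep hf #P.parts
    rcases exists_regular_graph_or_cellEntropy_add_le G hP hδ (hf _) hk hkδ
      (hle.trans (mod_cast (hgrow _).trans hn)) with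
      ⟨G', hedit, hreg⟩ | ⟨Q, hQP, hQ, hPQ, hQcard, hgain⟩
    · exact ⟨G', hedit, P, hP, le_rfl, hreg,
        (monotone_iterate_towerStep hf _ (Nat.zero_le 2)).trans (hgrow _)⟩
    · have hiter :
          (towerStep f)^[2 * t] #Q.parts ≤ (towerStep f)^[2 * t] ((towerStep f)^[2] #P.parts) :=
        (towerStep_mono hf hanti).iterate _ (mod_cast hQcard.trans hle)
      refine (ih hQ (hk.trans hPQ) (hkδ.trans ?_) (hiter.trans hn) ?_).mono hQP hiter
      · have hp := graphDensity_nonneg G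
        gcongr
      · push_cast at hent
        linarith

end Iteration

/-! ### Degenerate cases -/

section RegularApprox

variable {V : Type*} [Fintype V]

lemma editDist_top_le (G : SimpleGraph V) :
    (editDist G ⊤ : ℝ) ≤ (Fintype.card V : ℝ) ^ 2 / 2 - G.edgeSet.ncard := by
  have hsub : G.edgeSet ⊆ (⊤ : SimpleGraph V).edgeSet := SimpleGraph.edgeSet_mono le_top
  have htop : 2 * ((⊤ : SimpleGraph V).edgeSet.ncard : ℝ) ≤ (Fintype.card V : ℝ) ^ 2 := by
    calc 2 * ((⊤ : SimpleGraph V).edgeSet.ncard : ℝ)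
        = ∑ x, adjFun (⊤ : SimpleGraph V) x := (sum_adjFun _).symm
      _ ≤ ∑ _x : V × V, (1 : ℝ) := sum_le_sum fun x _ => (adjFun_mem_Icc _ x).2
      _ = (Fintype.card V : ℝ) ^ 2 := by simp [sq]
  rw [editDist, symmDiff_of_le hsub, Set.ncard_sdiff hsub, Nat.cast_sub (Set.ncard_le_ncard hsub)]
  linarith

variable [DecidableEq V] {G : SimpleGraph V} {P : Finpartition (univ : Finset V)} {f : ℕ → ℝ}
  {δ : ℝ}

lemma hasRegularApprox_of_one_le (hf : ∀ n, f n ∈ Set.Ioo (0 : ℝ) 1) (hP : P.IsEquipartition)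
    (hδ : 1 ≤ δ) : HasRegularApprox G f δ P #P.parts := by
  refine ⟨⊥, ?_, P, hP, le_rfl, fun A hA B hB _ => ?_, le_rfl⟩
  · rw [editDist, SimpleGraph.edgeSet_bot, ← Set.bot_eq_empty, symmDiff_bot]
    exact le_mul_of_one_le_left (Nat.cast_nonneg _) hδ
  · exact regPair_of_adjFun_eq (d := 0) (P.nonempty_of_mem_parts hA) (P.nonempty_of_mem_parts hB)
      (hf _) fun _ _ _ _ => by simp [adjFun]

lemma hasRegularApprox_of_one_le_mul_graphDensity (hf : ∀ n, f n ∈ Set.Ioo (0 : ℝ) 1)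
    (hP : P.IsEquipartition) (hδ : 1 ≤ (1 + δ) * graphDensity G) :
    HasRegularApprox G f δ P #P.parts := by
  refine ⟨⊤, (editDist_top_le G).trans ?_, P, hP, le_rfl, fun A hA B hB hAB => ?_, le_rfl⟩
  · have hE : 2 * (G.edgeSet.ncard : ℝ) = graphDensity G * (Fintype.card V : ℝ) ^ 2 := by
      rw [← sum_adjFun, sum_adjFun_eq_graphDensity_mul]
    have hmul := mul_le_mul_of_nonneg_right hδ (sq_nonneg (Fintype.card V : ℝ))
    rw [mul_assoc, ← hE] at hmul
    linarith
  · have hdisj := P.disjoint hA hB hAB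
    exact regPair_of_adjFun_eq (d := 1) (P.nonempty_of_mem_parts hA) (P.nonempty_of_mem_parts hB)
      (hf _) fun a ha b hb => by simp [adjFun, disjoint_iff_ne.1 hdisj a ha b hb]

lemma hasRegularApprox_card (hf : ∀ n, f n ∈ Set.Ioo (0 : ℝ) 1) (hδ : 0 ≤ δ) :
    HasRegularApprox G f δ P (Fintype.card V) := by
  refine ⟨G, ?_, ⊥, Finpartition.bot_isEquipartition _, bot_le, fun A hA B hB _ => ?_, ?_⟩
  · rw [editDist, symmDiff_self, Set.bot_eq_empty, Set.ncard_empty, Nat.cast_zero]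
    positivity
  · obtain ⟨a, -, rfl⟩ := Finpartition.mem_bot_iff.1 hA
    obtain ⟨b, -, rfl⟩ := Finpartition.mem_bot_iff.1 hB
    refine regPair_of_adjFun_eq (d := adjFun G (a, b)) (singleton_nonempty a) (singleton_nonempty b)
      (hf _) fun a' ha' b' hb' => ?_
    rw [mem_singleton.1 ha', mem_singleton.1 hb']
  · rw [Finpartition.card_bot, card_univ]

/-! ### The number of iterations -/

theorem hasRegularApprox_of_iterate_towerStep_le (hδ : 0 < δ)
    (hf : ∀ n, f n ∈ Set.Ioo (0 : ℝ) 1) (hanti : Antitone f) (hP : P.IsEquipartition)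
    (hk : 0 < #P.parts) {j t : ℕ} (hj : 256 ≤ 2 ^ j) (hjδ : 16 ≤ 2 ^ j * (δ * graphDensity G))
    (ht : Real.log (1 / graphDensity G) < t * (δ ^ 2 / 256))
    (hn : (towerStep f)^[2 * t + j] #P.parts ≤ Fintype.card V) :
    HasRegularApprox G f δ P ((towerStep f)^[2 * t + j] #P.parts) := by
  have hinit : #P.parts * 2 ^ j ≤ (towerStep f)^[j] #P.parts :=
    mul_two_pow_le_iterate_towerStep hf _ j
  have hnj : #P.parts * 2 ^ j ≤ Fintype.card V :=
    (hinit.trans (monotone_iterate_towerStep hf _ (Nat.le_add_left j _))).trans hn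
  obtain ⟨P₁, hP₁P, hP₁, hP₁card, -⟩ :=
    exists_equipartition_refinement hP le_rfl (by positivity) hk hnj
  have hle : 2 ^ j ≤ #P₁.parts := hP₁card ▸ Nat.le_mul_of_pos_left _ hk
  have hiter : (towerStep f)^[2 * t] #P₁.parts ≤ (towerStep f)^[2 * t + j] #P.parts := by
    rw [Function.iterate_add_apply]
    exact (towerStep_mono hf hanti).iterate _ (hP₁card.trans_le hinit)
  have hp : 0 < graphDensity G := by
    have hprod := pos_of_mul_pos_right (by linarith : 0 < 2 ^ j * (δ * graphDensity G))
      (by positivity)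
    exact pos_of_mul_pos_right hprod hδ.le
  have hsum : 0 < ∑ x, adjFun G x := by
    have hV : 0 < Fintype.card V := (Nat.mul_pos hk (by positivity)).trans_le hnj
    rw [sum_adjFun_eq_graphDensity_mul]
    positivity
  refine (hasRegularApprox_of_cellEntropy_lt hδ hf hanti t hP₁ (hj.trans hle) (hjδ.trans ?_)
    (hiter.trans hn) ?_).mono hP₁P hiter
  · gcongr
    exact_mod_cast hle
  · calc cellEntropy G P₁ ≤ Real.log (1 / graphDensity G) * ∑ x, adjFun G x := cellEntropy_le G P₁
      _ < t * (δ ^ 2 / 256) * ∑ x, adjFun G x := by gcongr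
      _ = t * (δ ^ 2 / 256 * ∑ x, adjFun G x) := mul_assoc _ _ _

end RegularApprox

section IterationCount

variable {δ p : ℝ}

lemma one_le_one_add_mul_of_log_one_div_le (hδ : δ ∈ Set.Ioo 0 1) (hp : 0 < p)
    (h : Real.log (1 / p) ≤ δ / 2) : 1 ≤ (1 + δ) * p := by
  have hlog := Real.log_le_sub_one_of_pos hp
  rw [one_div, Real.log_inv] at h
  nlinarith [hδ.1, hδ.2]

lemma exp_le_two_rpow_two_mul {x : ℝ} (hx : 0 ≤ x) : Real.exp x ≤ (2 : ℝ) ^ (2 * x) := by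
  rw [Real.rpow_def_of_pos two_pos, Real.exp_le_exp]
  nlinarith [Real.log_two_gt_d9]

lemma sixteen_div_le_two_rpow {L : ℝ} (hδ : δ ∈ Set.Ioo 0 1) (hp : 0 < p)
    (hL : L * δ ^ 2 = Real.log (1 / p)) (hδL : 1 / δ ≤ 2 * L) :
    16 * (1 / δ * (1 / p)) ≤ (2 : ℝ) ^ (16 * L) := by
  have hone : 1 ≤ 1 / δ := (one_le_div hδ.1).2 hδ.2.le
  have hδ' : 1 / δ ≤ (2 : ℝ) ^ (4 * L) := by
    calc 1 / δ ≤ Real.exp (2 * L) := by linarith [Real.add_one_le_exp (2 * L)]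
      _ ≤ (2 : ℝ) ^ (2 * (2 * L)) := exp_le_two_rpow_two_mul (by linarith)
      _ = (2 : ℝ) ^ (4 * L) := by ring_nf
  have hp' : 1 / p ≤ (2 : ℝ) ^ (2 * L) := by
    calc 1 / p = Real.exp (L * δ ^ 2) := by rw [hL, Real.exp_log (by positivity)]
      _ ≤ Real.exp L := by
          gcongr
          exact mul_le_of_le_one_right (by linarith) (pow_le_one₀ hδ.1.le hδ.2.le)
      _ ≤ (2 : ℝ) ^ (2 * L) := exp_le_two_rpow_two_mul (by linarith)
  have hδ0 := hδ.1
  calc 16 * (1 / δ * (1 / p))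
      ≤ (2 : ℝ) ^ (4 : ℝ) * ((2 : ℝ) ^ (4 * L) * (2 : ℝ) ^ (2 * L)) := by
        gcongr
        norm_num
    _ = (2 : ℝ) ^ (4 + (4 * L + 2 * L)) := by
        rw [Real.rpow_add two_pos, Real.rpow_add two_pos]
    _ ≤ (2 : ℝ) ^ (16 * L) := by
        gcongr
        · norm_num
        · linarith

lemma exists_iteration_counts (hδ : δ ∈ Set.Ioo 0 1) (hp : 0 < p)
    (hlog : δ / 2 < Real.log (1 / p)) :
    ∃ j t : ℕ, 256 ≤ 2 ^ j ∧ 16 ≤ 2 ^ j * (δ * p) ∧ Real.log (1 / p) < t * (δ ^ 2 / 256) ∧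
      2 * t + j ≤ ⌈600 * Real.log (1 / p) / δ ^ 2⌉₊ := by
  have hδ0 : 0 < δ := hδ.1
  set L := Real.log (1 / p) / δ ^ 2 with hLdef
  have hL : L * δ ^ 2 = Real.log (1 / p) := div_mul_cancel₀ _ (by positivity)
  have hone : 1 ≤ 1 / δ := (one_le_div hδ0).2 hδ.2.le
  have hδL : 1 / δ ≤ 2 * L := by
    rw [div_le_iff₀ hδ0]
    refine le_of_mul_le_mul_right ?_ hδ0
    linarith
  have hpow : (2 : ℝ) ^ (16 * L) ≤ (2 : ℝ) ^ ⌈16 * L⌉₊ := by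
    rw [← Real.rpow_natCast]
    gcongr
    · norm_num
    · exact Nat.le_ceil _
  refine ⟨⌈16 * L⌉₊, ⌊256 * L⌋₊ + 1, ?_, ?_, ?_, ?_⟩
  · have hj : 8 ≤ ⌈16 * L⌉₊ := by
      have hj' : (8 : ℝ) ≤ ⌈16 * L⌉₊ := (by linarith : (8 : ℝ) ≤ 16 * L).trans (Nat.le_ceil _)
      exact_mod_cast hj'
    exact (by norm_num : 256 = 2 ^ 8).trans_le (Nat.pow_le_pow_right two_pos hj)
  · calc (16 : ℝ) = 16 * (1 / δ * (1 / p)) * (δ * p) := by field_simp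
      _ ≤ 2 ^ ⌈16 * L⌉₊ * (δ * p) := by
          gcongr
          exact (sixteen_div_le_two_rpow hδ hp hL hδL).trans hpow
  · rw [← hL, ← mul_div_assoc, lt_div_iff₀ (by norm_num), mul_right_comm, mul_comm L]
    gcongr
    push_cast
    exact Nat.lt_floor_add_one _
  · have hj : (⌈16 * L⌉₊ : ℝ) < 16 * L + 1 := Nat.ceil_lt_add_one (by linarith)
    have ht : (⌊256 * L⌋₊ : ℝ) ≤ 256 * L := Nat.floor_le (by linarith)
    have hH : 600 * L ≤ ⌈600 * L⌉₊ := Nat.le_ceil _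
    rw [mul_div_assoc, ← hLdef]
    have hsum : 2 * ((⌊256 * L⌋₊ : ℝ) + 1) + ⌈16 * L⌉₊ ≤ ⌈600 * L⌉₊ := by linarith
    exact_mod_cast hsum

end IterationCount

/-- **Stronger form of the SRAL upper bound (Theorem 6.1 / SRAL2).**
There is an absolute constant `C > 0` such that: for every `δ > 0`, positive integer `s`,
and decreasing `f : ℕ → (0,1)`, for any graph `G` of density `p > 0` and any equipartition
`P₀` of order `s`, one can add/remove at most `δ|E(G)|` edges to obtain a graph having an
`f`-regular equipartition refining `P₀` of order at most `F^{(h)}(s)`, where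
`F(x) = 2^{x/f(x)}` and `h = ⌈C·log(1/p)/δ²⌉`. -/
theorem sral2_upper_bound :
    ∃ C : ℝ, 0 < C ∧
      ∀ δ : ℝ, 0 < δ →
      ∀ s : ℕ, 0 < s →
      ∀ f : ℕ → ℝ, (∀ n, f n ∈ Set.Ioo (0 : ℝ) 1) → Antitone f →
      ∀ (V : Type) (_ : Fintype V) (_ : DecidableEq V) (G : SimpleGraph V) (p : ℝ),
        p = graphDensity G → 0 < p →
        ∀ P₀ : Finpartition (univ : Finset V), P₀.IsEquipartition → P₀.parts.card = s →
        ∃ G' : SimpleGraph V,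
          ((symmDiff G.edgeSet G'.edgeSet).ncard : ℝ) ≤ δ * G.edgeSet.ncard ∧
          ∃ Z : Finpartition (univ : Finset V), Z.IsEquipartition ∧ Z ≤ P₀ ∧
            (∀ A ∈ Z.parts, ∀ B ∈ Z.parts, A ≠ B → RegPair G' (f Z.parts.card) A B) ∧
            Z.parts.card ≤
              (fun x : ℕ => ⌈(2 : ℝ) ^ ((x : ℝ) / f x)⌉₊)^[⌈C * Real.log (1 / p) / δ ^ 2⌉₊] s := by
  refine ⟨600, by norm_num, ?_⟩
  rintro δ hδ s hs f hf hanti V _ _ G _ rfl hp P₀ hP₀ rfl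
  set H := ⌈600 * Real.log (1 / graphDensity G) / δ ^ 2⌉₊
  suffices HasRegularApprox G f δ P₀ ((towerStep f)^[H] #P₀.parts) from this
  have hmono := monotone_iterate_towerStep hf #P₀.parts
  have hP₀H : #P₀.parts ≤ (towerStep f)^[H] #P₀.parts := hmono (Nat.zero_le H)
  rcases le_or_gt 1 δ with hδ1 | hδ1
  · exact (hasRegularApprox_of_one_le hf hP₀ hδ1).mono le_rfl hP₀H
  rcases le_or_gt (Real.log (1 / graphDensity G)) (δ / 2) with hlog | hlog
  · exact (hasRegularApprox_of_one_le_mul_graphDensity hf hP₀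
      (one_le_one_add_mul_of_log_one_div_le ⟨hδ, hδ1⟩ hp hlog)).mono le_rfl hP₀H
  rcases le_or_gt (Fintype.card V) ((towerStep f)^[H] #P₀.parts) with hn | hn
  · exact (hasRegularApprox_card hf hδ.le).mono le_rfl hn
  obtain ⟨j, t, hj, hjδ, ht, hH⟩ := exists_iteration_counts ⟨hδ, hδ1⟩ hp hlog
  exact (hasRegularApprox_of_iterate_towerStep_le hδ hf hanti hP₀ hs hj hjδ ht
    ((hmono hH).trans hn.le)).mono le_rfl (hmono hH)
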